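/- arXiv:1712.08286 — 3 statements merged into one kernel-verified Lean document; each statement's English description precedes it below -/
import Mathlib

section
/- For every n ≥ 2 and every continuous function f : [0,1]^n → ℝ, there exist continuous functions ψ^{pq} : [0,1] → [0,1] (for p ∈ {1,…,n}, q ∈ {0,…,2n}) and continuous functions χ^q : ℝ → ℝ (for q ∈ {0,…,2n}) such that for all (x_1,…,x_n) ∈ [0,1]^n, f(x_1,…,x_n) = Σ_{q=0}^{2n} χ^q( Σ_{p=1}^n ψ^{pq}(x_p) ). -/
theorem KST.digits (n M : ℕ) (δ : ℝ) (hδ : 0 < δ) (a : Fin n → Fin M → ℝ) :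
    ∃ v : Fin n → Fin M → ℝ, (∀ p i, |v p i - a p i| ≤ δ) ∧
      Function.Injective (fun i : Fin n → Fin M => ∑ p, v p (i p)) := by
  refine ⟨fun p i => δ * (⌊a p i / δ⌋ + ((i : ℕ) * M ^ (p : ℕ) : ℝ) / M ^ n), ?_, ?_⟩
  · intro p i
    have hM : 0 < M := i.pos
    have hMn : (0 : ℝ) < (M : ℝ) ^ n := by positivity
    have h0 : 0 ≤ ((i : ℕ) * M ^ (p : ℕ) : ℝ) / M ^ n := by positivity
    have h1 : ((i : ℕ) * M ^ (p : ℕ) : ℝ) / M ^ n ≤ 1 := by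
      rw [div_le_one hMn]
      have : (i : ℕ) * M ^ (p : ℕ) ≤ M ^ n := by
        calc (i : ℕ) * M ^ (p : ℕ) ≤ M * M ^ (p : ℕ) := Nat.mul_le_mul_right _ i.2.le
          _ = M ^ ((p : ℕ) + 1) := by ring
          _ ≤ M ^ n := Nat.pow_le_pow_right hM p.2
      exact_mod_cast this
    have e : a p i = δ * (a p i / δ) := by field_simp
    have h2 := Int.floor_le (a p i / δ)
    have h3 := Int.lt_floor_add_one (a p i / δ)
    have : δ * (⌊a p i / δ⌋ + ((i : ℕ) * M ^ (p : ℕ) : ℝ) / M ^ n) - a p i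
      = δ * (⌊a p i / δ⌋ + ((i : ℕ) * M ^ (p : ℕ) : ℝ) / M ^ n - a p i / δ) := by
      field_simp
    rw [this, abs_mul, abs_of_pos hδ]
    refine mul_le_of_le_one_right hδ.le ?_
    rw [abs_le]; constructor <;> linarith
  · intro i j hij
    simp only at hij
    rw [← Finset.mul_sum, ← Finset.mul_sum] at hij
    have hij := mul_left_cancel₀ hδ.ne' hij
    rw [Finset.sum_add_distrib, Finset.sum_add_distrib, ← Finset.sum_div, ← Finset.sum_div] at hij
    have key : ∀ k : Fin n → Fin M, (∑ p, ((k p : ℕ) * M ^ (p : ℕ) : ℝ))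
        = ((finFunctionFinEquiv k : ℕ) : ℝ) := by
      intro k; rw [finFunctionFinEquiv_apply]; push_cast; rfl
    rw [key, key] at hij
    apply finFunctionFinEquiv.injective
    apply Fin.ext
    have hpos : 0 < M ^ n := (finFunctionFinEquiv i).pos
    have hMn : (0 : ℝ) < (M : ℝ) ^ n := by exact_mod_cast hpos
    have fr : ∀ k : Fin n → Fin M,
        Int.fract ((∑ p, (⌊a p (k p) / δ⌋ : ℝ)) + ((finFunctionFinEquiv k : ℕ) : ℝ) / M ^ n)
        = ((finFunctionFinEquiv k : ℕ) : ℝ) / M ^ n := by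
      intro k
      rw [← Int.cast_sum, Int.fract_intCast_add, Int.fract_eq_self]
      refine ⟨by positivity, ?_⟩
      rw [div_lt_one hMn]
      exact_mod_cast (finFunctionFinEquiv k).2
    have := congrArg Int.fract hij
    rw [fr, fr, div_left_inj' hMn.ne'] at this
    exact_mod_cast this

theorem KST.islands (n N : ℕ) (hN : 0 < N) :
    ∃ (M : ℕ) (idx : Fin (2 * n + 1) → unitInterval → Fin M)
      (A : Fin (2 * n + 1) → Set unitInterval),
      (∀ q, IsClosed (A q)) ∧ (∀ q, ContinuousOn (idx q) (A q)) ∧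
      (∀ q, ∀ x ∈ A q, ∀ y ∈ A q, idx q x = idx q y → dist x y ≤ 1 / N) ∧
      (∀ x q q', x ∉ A q → x ∉ A q' → q = q') := by
  set D : ℝ := 2 * n + 1 with hD
  have hDpos : 0 < D := by positivity
  have hNr : (0 : ℝ) < N := by exact_mod_cast hN
  let y : Fin (2 * n + 1) → unitInterval → ℝ := fun q x => N * (x : ℝ) + (q : ℕ) / D
  have hy0 : ∀ q x, 0 ≤ y q x := fun q x => by
    have := x.2.1
    simp only [y]; positivity
  have hq1 : ∀ q : Fin (2 * n + 1), ((q : ℕ) : ℝ) / D < 1 := fun q => by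
    rw [div_lt_one hDpos, hD]; exact_mod_cast q.2
  have hyN : ∀ q x, ⌊y q x⌋₊ < N + 1 := fun q x => by
    rw [Nat.floor_lt (hy0 q x)]
    have := x.2.2
    have := hq1 q
    simp only [y]; push_cast; nlinarith
  have hyc : ∀ q, Continuous (y q) := fun q => by simp only [y]; fun_prop
  let J : Fin (2 * n + 1) → Fin (N + 1) → Set unitInterval := fun q i =>
    y q ⁻¹' Set.Icc ((i : ℕ) : ℝ) ((i : ℕ) + 1 - 1 / D)
  have hJc : ∀ q i, IsClosed (J q i) := fun q i => isClosed_Icc.preimage (hyc q)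
  have hDi : 0 < 1 / D := by positivity
  have hJ : ∀ q i x, x ∈ J q i → (⟨⌊y q x⌋₊, hyN q x⟩ : Fin (N + 1)) = i := by
    intro q i x hx
    apply Fin.ext
    simp only
    rw [Nat.floor_eq_iff (hy0 q x)]
    exact ⟨hx.1, by linarith [hx.2]⟩
  refine ⟨N + 1, fun q x => ⟨⌊y q x⌋₊, hyN q x⟩, fun q => ⋃ i, J q i, ?_, ?_, ?_, ?_⟩
  · exact fun q => isClosed_iUnion_of_finite (hJc q)
  · intro q
    refine (locallyFinite_of_finite _).continuousOn_iUnion (hJc q) fun i => ?_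
    exact (continuousOn_const (c := i)).congr fun x hx => hJ q i x hx
  · intro q x hx x' hx' h
    obtain ⟨i, hi⟩ := Set.mem_iUnion.1 hx
    obtain ⟨j, hj⟩ := Set.mem_iUnion.1 hx'
    simp only [hJ q i x hi, hJ q j x' hj] at h
    subst h
    have h1 := hi.1
    have h2 := hi.2
    have h3 := hj.1
    have h4 := hj.2
    simp only [y] at h1 h2 h3 h4
    rw [Subtype.dist_eq, Real.dist_eq, le_div_iff₀ hNr, ← abs_of_pos hNr, ← abs_mul,
      abs_le]
    constructor <;> nlinarith
  · have main : ∀ (x : unitInterval) (q q' : Fin (2 * n + 1)), x ∉ ⋃ i, J q i →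
        x ∉ ⋃ i, J q' i → ¬ q < q' := by
      intro x q q' h h' hlt
      have g : ∀ q, x ∉ ⋃ i, J q i → (⌊y q x⌋₊ : ℝ) + 1 - 1 / D < y q x := by
        intro q h
        by_contra hc
        push Not at hc
        exact h (Set.mem_iUnion.2 ⟨⟨⌊y q x⌋₊, hyN q x⟩, Nat.floor_le (hy0 q x), hc⟩)
      have g1 := g q h
      have g2 := g q' h'
      have g3 := Nat.lt_floor_add_one (y q x)
      have g4 := Nat.lt_floor_add_one (y q' x)
      have e : y q' x = y q x + (((q' : ℕ) : ℝ) - (q : ℕ)) * (1 / D) := by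
        simp only [y]; ring
      have l1 : (1 : ℝ) ≤ ((q' : ℕ) : ℝ) - (q : ℕ) := by
        have : (q : ℕ) + 1 ≤ (q' : ℕ) := hlt
        have : ((q : ℕ) : ℝ) + 1 ≤ (q' : ℕ) := by exact_mod_cast this
        linarith
      have l2 : ((q' : ℕ) : ℝ) - (q : ℕ) ≤ D - 1 := by
        have : (q' : ℕ) ≤ 2 * n := by omega
        have : ((q' : ℕ) : ℝ) ≤ 2 * n := by exact_mod_cast this
        have : (0 : ℝ) ≤ (q : ℕ) := by positivity
        linarith
      have d1 : D * (1 / D) = 1 := by field_simp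
      have m1 : 1 / D ≤ (((q' : ℕ) : ℝ) - (q : ℕ)) * (1 / D) := by nlinarith
      have m2 : (((q' : ℕ) : ℝ) - (q : ℕ)) * (1 / D) ≤ 1 - 1 / D := by nlinarith
      have k1 : (⌊y q x⌋₊ : ℝ) < ⌊y q' x⌋₊ := by linarith
      have k2 : (⌊y q' x⌋₊ : ℝ) < ⌊y q x⌋₊ + 1 := by linarith
      have k1' : ⌊y q x⌋₊ < ⌊y q' x⌋₊ := by exact_mod_cast k1
      have k2' : ⌊y q' x⌋₊ < ⌊y q x⌋₊ + 1 := by exact_mod_cast k2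
      omega
    intro x q q' h h'
    rcases lt_trichotomy q q' with hl | hl | hl
    · exact absurd hl (main x q q' h h')
    · exact hl
    · exact absurd hl (main x q' q h' h)

theorem KST.surj {E F : Type*} [NormedAddCommGroup E] [NormedSpace ℝ E] [CompleteSpace E]
    [NormedAddCommGroup F] [NormedSpace ℝ F] (T : E →L[ℝ] F) (C θ : ℝ) (h0 : 0 ≤ θ) (h1 : θ < 1)
    (hT : ∀ g, ∃ e, ‖e‖ ≤ C * ‖g‖ ∧ ‖g - T e‖ ≤ θ * ‖g‖) : Function.Surjective T := by
  intro g
  choose e he1 he2 using hT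
  let s : ℕ → F := fun k => (fun h => h - T (e h))^[k] g
  have hs : ∀ k, s (k + 1) = s k - T (e (s k)) := fun k => by
    simp only [s, Function.iterate_succ_apply']
  have hb : ∀ k, ‖s k‖ ≤ θ ^ k * ‖g‖ := by
    intro k
    induction k with
    | zero => simp [s]
    | succ k ih =>
      rw [hs]
      calc _ ≤ θ * ‖s k‖ := he2 _
        _ ≤ θ * (θ ^ k * ‖g‖) := by gcongr
        _ = _ := by ring
  have hsum : Summable fun k => e (s k) := by
    refine Summable.of_norm_bounded (g := fun k => θ ^ k * (|C| * ‖g‖))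
      ((summable_geometric_of_lt_one h0 h1).mul_right _) fun k => ?_
    calc ‖e (s k)‖ ≤ C * ‖s k‖ := he1 _
      _ ≤ |C| * ‖s k‖ := by gcongr; exact le_abs_self C
      _ ≤ |C| * (θ ^ k * ‖g‖) := by gcongr; exact hb k
      _ = _ := by ring
  refine ⟨∑' k, e (s k), ?_⟩
  have ht := (T.hasSum hsum.hasSum).tendsto_sum_nat
  have hp : ∀ m, ∑ k ∈ Finset.range m, T (e (s k)) = g - s m := by
    intro m
    induction m with
    | zero => simp [s]
    | succ m ih => rw [Finset.sum_range_succ, ih, hs]; abel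
  have hz : Filter.Tendsto s Filter.atTop (nhds 0) := by
    refine squeeze_zero_norm hb ?_
    simpa using (tendsto_pow_atTop_nhds_zero_of_lt_one h0 h1).mul_const ‖g‖
  have h2 : Filter.Tendsto (fun m => g - s m) Filter.atTop (nhds (g - 0)) := hz.const_sub g
  rw [sub_zero] at h2
  refine tendsto_nhds_unique ht ?_
  simpa only [hp] using h2

open scoped BoundedContinuousFunction

/-- The superposition `x ↦ ∑ q, χ q (∑ p, Ψ p q (x p))` as a continuous function on the cube. -/
noncomputable def KST.sup (n D : ℕ) (χ : Fin D → ℝ →ᵇ ℝ)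
    (Ψ : Fin n → Fin D → C(unitInterval, ℝ)) : C(Fin n → unitInterval, ℝ) :=
  ∑ q, (χ q).toContinuousMap.comp
    (∑ p, (Ψ p q).comp (⟨fun x => x p, continuous_apply p⟩ : C(Fin n → unitInterval, unitInterval)))

theorem KST.sup_apply (n D : ℕ) (χ : Fin D → ℝ →ᵇ ℝ)
    (Ψ : Fin n → Fin D → C(unitInterval, ℝ)) (x : Fin n → unitInterval) :
    KST.sup n D χ Ψ x = ∑ q, χ q (∑ p, Ψ p q (x p)) := by
  simp [KST.sup, ContinuousMap.sum_apply]

theorem KST.sup_continuous (n D : ℕ) (χ : Fin D → ℝ →ᵇ ℝ) : Continuous (KST.sup n D χ) := by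
  unfold KST.sup
  refine continuous_finsetSum _ fun q _ => ?_
  refine (ContinuousMap.continuous_postcomp _).comp ?_
  refine continuous_finsetSum _ fun p _ => ?_
  exact (ContinuousMap.continuous_precomp _).comp
    ((continuous_apply q).comp (continuous_apply p))

theorem KST.interp {ι : Type*} [Finite ι] [TopologicalSpace ι] [DiscreteTopology ι]
    (V : ι → ℝ) (hV : Function.Injective V) (c : ι → ℝ) (B : ℝ) (hB : 0 ≤ B) (hc : ∀ i, |c i| ≤ B) :
    ∃ χ : ℝ →ᵇ ℝ, ‖χ‖ ≤ B ∧ ∀ i, χ (V i) = c i := by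
  have hcl : Topology.IsClosedEmbedding V :=
    continuous_of_discreteTopology.isClosedEmbedding hV
  obtain ⟨g, hg, hg'⟩ := BoundedContinuousFunction.exists_extension_norm_eq_of_isClosedEmbedding
    (BoundedContinuousFunction.ofNormedAddCommGroup c continuous_of_discreteTopology B hc) hcl
  refine ⟨g, ?_, fun i => congrFun hg' i⟩
  rw [hg]
  exact BoundedContinuousFunction.norm_ofNormedAddCommGroup_le _ hB hc

theorem KST.modify (A : Set unitInterval) (hA : IsClosed A) (ψ : C(unitInterval, ℝ))
    (h : unitInterval → ℝ) (hh : ContinuousOn h A) (B : ℝ) (hB : 0 ≤ B)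
    (hb : ∀ x ∈ A, |h x - ψ x| ≤ B) :
    ∃ φ : C(unitInterval, ℝ), dist φ ψ ≤ B ∧ ∀ x ∈ A, φ x = h x := by
  have hc : Continuous (fun x : A => h x - ψ x) :=
    (continuousOn_iff_continuous_domRestrict.1 hh).sub (ψ.continuous.comp continuous_subtype_val)
  have hb' : ∀ x : A, ‖h x - ψ x‖ ≤ B := fun x => hb x x.2
  obtain ⟨g, hg, hg'⟩ := BoundedContinuousFunction.exists_extension_norm_eq_of_isClosedEmbedding
    (BoundedContinuousFunction.ofNormedAddCommGroup (fun x : A => h x - ψ x) hc B hb')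
    hA.isClosedEmbedding_subtypeVal
  have hgB : ‖g‖ ≤ B := by
    rw [hg]
    exact BoundedContinuousFunction.norm_ofNormedAddCommGroup_le _ hB hb'
  refine ⟨ψ + g.toContinuousMap, ?_, fun x hx => ?_⟩
  · rw [ContinuousMap.dist_le hB]
    intro x
    simp only [ContinuousMap.add_apply, dist_self_add_left]
    exact (g.norm_coe_le_norm x).trans hgB
  · have := congrFun hg' ⟨x, hx⟩
    change g x = h x - ψ x at this
    change ψ x + g x = h x
    rw [this]; ring

theorem KST.step (n : ℕ) (f : C(Fin n → unitInterval, ℝ)) (hf : f ≠ 0)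
    (Ψ₀ : Fin n → Fin (2 * n + 1) → C(unitInterval, ℝ)) (δ : ℝ) (hδ : 0 < δ) :
    ∃ (Ψ : Fin n → Fin (2 * n + 1) → C(unitInterval, ℝ)) (χ : Fin (2 * n + 1) → ℝ →ᵇ ℝ),
      dist Ψ Ψ₀ ≤ 2 * δ ∧ (∀ q, ‖χ q‖ ≤ ‖f‖) ∧
      ‖f - KST.sup n (2 * n + 1) χ Ψ‖ < (1 - 1 / (2 * (2 * n + 1))) * ‖f‖ := by
  have hfpos : 0 < ‖f‖ := norm_pos_iff.2 hf
  set D : ℝ := 2 * n + 1 with hD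
  have hDpos : 0 < D := by positivity
  have hD1 : 1 ≤ D := by rw [hD]; linarith [(Nat.cast_nonneg n : (0 : ℝ) ≤ n)]
  set ε : ℝ := ‖f‖ / (4 * D) with hε
  have hεpos : 0 < ε := by positivity
  have uf := CompactSpace.uniformContinuous_of_continuous f.continuous
  have uΨ : UniformContinuous (fun x : unitInterval => fun p q => Ψ₀ p q x) :=
    CompactSpace.uniformContinuous_of_continuous (by fun_prop)
  obtain ⟨η₁, hη₁, uf⟩ := Metric.uniformContinuous_iff.1 uf ε hεpos
  obtain ⟨η₂, hη₂, uΨ⟩ := Metric.uniformContinuous_iff.1 uΨ δ hδ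
  obtain ⟨N, hN⟩ := exists_nat_one_div_lt (lt_min hη₁ hη₂)
  obtain ⟨M, idx, A, hA, hidx, hd, hq⟩ := KST.islands n (N + 1) N.succ_pos
  have hr : ∀ q i, ∃ r : unitInterval, ∀ x ∈ A q, idx q x = i → dist x r < min η₁ η₂ := by
    intro q i
    by_cases h : ∃ x ∈ A q, idx q x = i
    · obtain ⟨r, hr, hi⟩ := h
      refine ⟨r, fun x hx hxi => lt_of_le_of_lt (hd q x hx r hr (hxi.trans hi.symm)) ?_⟩
      push_cast
      exact hN
    · exact ⟨0, fun x hx hi => absurd ⟨x, hx, hi⟩ h⟩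
  choose r hr using hr
  choose v hv1 hv2 using fun q => KST.digits n M δ hδ (fun p i => Ψ₀ p q (r q i))
  have hΨ : ∀ p q, ∃ φ : C(unitInterval, ℝ), dist φ (Ψ₀ p q) ≤ 2 * δ ∧
      ∀ x ∈ A q, φ x = v q p (idx q x) := by
    intro p q
    refine KST.modify (A q) (hA q) (Ψ₀ p q) (fun x => v q p (idx q x)) ?_ (2 * δ) (by positivity) ?_
    · exact (continuous_of_discreteTopology (f := v q p)).comp_continuousOn (hidx q)
    · intro x hx
      have h1 := hv1 q p (idx q x)
      have h2 := uΨ ((hr q _ x hx rfl).trans_le (min_le_right _ _))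
      have h3 : dist (Ψ₀ p q x) (Ψ₀ p q (r q (idx q x))) < δ :=
        ((dist_le_pi_dist (fun q => Ψ₀ p q x) (fun q' => Ψ₀ p q' (r q (idx q x))) q).trans
          (dist_le_pi_dist (fun p q => Ψ₀ p q x) (fun p q' => Ψ₀ p q' (r q (idx q x))) p)).trans_lt h2
      rw [Real.dist_eq] at h3
      rw [abs_le] at h1 ⊢
      rw [abs_lt] at h3
      constructor <;> linarith
  choose Ψ hΨ1 hΨ2 using hΨ
  have hχ : ∀ q, ∃ χ : ℝ →ᵇ ℝ, ‖χ‖ ≤ ‖f‖ / D ∧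
      ∀ i : Fin n → Fin M, χ (∑ p, v q p (i p)) = f (fun p => r q (i p)) / D := by
    intro q
    refine KST.interp _ (hv2 q) _ _ (by positivity) fun i => ?_
    rw [abs_div, abs_of_pos hDpos]
    gcongr
    exact f.norm_coe_le_norm _
  choose χ hχ1 hχ2 using hχ
  refine ⟨Ψ, χ, ?_, fun q => (hχ1 q).trans (div_le_self hfpos.le hD1), ?_⟩
  · rw [dist_pi_le_iff (by positivity)]
    intro p
    rw [dist_pi_le_iff (by positivity)]
    exact hΨ1 p
  · have hθ : 0 < (1 - 1 / (2 * D)) * ‖f‖ := by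
      refine mul_pos ?_ hfpos
      rw [sub_pos, div_lt_one (by positivity)]
      linarith
    rw [ContinuousMap.norm_lt_iff _ hθ]
    intro x
    rw [ContinuousMap.sub_apply, KST.sup_apply]
    classical
    let bad : Finset (Fin (2 * n + 1)) := Finset.univ.filter fun q => ∃ p, x p ∉ A q
    have hbad : bad.card ≤ n := by
      have : ∀ q : bad, ∃ p, x p ∉ A q := fun q => (Finset.mem_filter.1 q.2).2
      choose w hw using this
      have hinj : Function.Injective w := by
        intro a b hab
        apply Subtype.ext
        refine hq (x (w a)) a b (hw a) ?_
        rw [hab]; exact hw b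
      simpa using Fintype.card_le_of_injective w hinj
    have hfx : f x = ∑ q : Fin (2 * n + 1), f x / D := by
      rw [Finset.sum_const, Finset.card_univ, Fintype.card_fin, nsmul_eq_mul]
      push_cast
      rw [← hD]; field_simp
    have hterm : ∀ q, |f x / D - χ q (∑ p, Ψ p q (x p))|
        ≤ ε / D + if q ∈ bad then 2 * ‖f‖ / D else 0 := by
      intro q
      split_ifs with hqb
      · have h1 : |f x / D| ≤ ‖f‖ / D := by
          rw [abs_div, abs_of_pos hDpos]
          gcongr
          exact f.norm_coe_le_norm _
        have h2 : |χ q (∑ p, Ψ p q (x p))| ≤ ‖f‖ / D :=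
          ((χ q).norm_coe_le_norm _).trans (hχ1 q)
        have h3 : 0 < ε / D := by positivity
        have h4 : 2 * ‖f‖ / D = ‖f‖ / D + ‖f‖ / D := by ring
        have h5 := abs_sub (f x / D) (χ q (∑ p, Ψ p q (x p)))
        linarith
      · have hg : ∀ p, x p ∈ A q := by
          intro p
          by_contra hc
          exact hqb (Finset.mem_filter.2 ⟨Finset.mem_univ _, p, hc⟩)
        have e : ∑ p, Ψ p q (x p) = ∑ p, v q p (idx q (x p)) :=
          Finset.sum_congr rfl fun p _ => hΨ2 p q _ (hg p)
        rw [e, hχ2 q (fun p => idx q (x p)), ← sub_div, abs_div, abs_of_pos hDpos, add_zero]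
        gcongr
        have : dist x (fun p => r q (idx q (x p))) < η₁ := by
          rw [dist_pi_lt_iff hη₁]
          exact fun p => (hr q _ _ (hg p) rfl).trans_le (min_le_left _ _)
        have := uf this
        rw [Real.dist_eq] at this
        exact this.le
    calc ‖f x - ∑ q, χ q (∑ p, Ψ p q (x p))‖
        = |∑ q, (f x / D - χ q (∑ p, Ψ p q (x p)))| := by
          rw [Finset.sum_sub_distrib, ← hfx, Real.norm_eq_abs]
      _ ≤ ∑ q, |f x / D - χ q (∑ p, Ψ p q (x p))| := Finset.abs_sum_le_sum_abs _ _
      _ ≤ ∑ q, (ε / D + if q ∈ bad then 2 * ‖f‖ / D else 0) :=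
          Finset.sum_le_sum fun q _ => hterm q
      _ = ε + bad.card * (2 * ‖f‖ / D) := by
          rw [Finset.sum_add_distrib, Finset.sum_const, Finset.card_univ, Fintype.card_fin,
            nsmul_eq_mul, Finset.sum_ite_mem, Finset.univ_inter, Finset.sum_const, nsmul_eq_mul]
          have hc : ((2 * n + 1 : ℕ) : ℝ) = D := by push_cast; rfl
          rw [hc, mul_div_cancel₀ _ hDpos.ne']
      _ ≤ ε + n * (2 * ‖f‖ / D) := by gcongr
      _ < (1 - 1 / (2 * D)) * ‖f‖ := by
          have : (n : ℝ) = (D - 1) / 2 := by rw [hD]; ring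
          rw [this, hε]
          have e1 : (1 - 1 / (2 * D)) * ‖f‖ - (‖f‖ / (4 * D) + (D - 1) / 2 * (2 * ‖f‖ / D))
            = ‖f‖ / (4 * D) := by field_simp; ring
          linarith

theorem KST.exists_universal (n : ℕ) :
    ∃ Ψ : Fin n → Fin (2 * n + 1) → C(unitInterval, ℝ),
      ∀ f : C(Fin n → unitInterval, ℝ), ∃ χ : Fin (2 * n + 1) → ℝ →ᵇ ℝ,
        KST.sup n (2 * n + 1) χ Ψ = f := by
  obtain ⟨S, hSc, hSd⟩ := TopologicalSpace.exists_countable_dense C(Fin n → unitInterval, ℝ)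
  set D : ℝ := 2 * n + 1 with hD
  have hD1 : 1 ≤ D := by rw [hD]; linarith [(Nat.cast_nonneg n : (0 : ℝ) ≤ n)]
  have hDpos : 0 < D := by positivity
  let Ω : C(Fin n → unitInterval, ℝ) → Set (Fin n → Fin (2 * n + 1) → C(unitInterval, ℝ)) :=
    fun f => ⋃ χ ∈ {χ : Fin (2 * n + 1) → ℝ →ᵇ ℝ | ∀ q, ‖χ q‖ ≤ ‖f‖},
      {Ψ | ‖f - KST.sup n (2 * n + 1) χ Ψ‖ < (1 - 1 / (2 * D)) * ‖f‖}
  have hopen : ∀ f ∈ S \ {0}, IsOpen (Ω f) := by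
    intro f _
    refine isOpen_biUnion fun χ _ => ?_
    exact isOpen_lt (continuous_const.sub (KST.sup_continuous n _ χ)).norm continuous_const
  have hdense : ∀ f ∈ S \ {0}, Dense (Ω f) := by
    intro f hf
    rw [Metric.dense_iff]
    intro Ψ₀ ρ hρ
    obtain ⟨Ψ, χ, h1, h2, h3⟩ := KST.step n f hf.2 Ψ₀ (ρ / 4) (by positivity)
    refine ⟨Ψ, ?_, Set.mem_biUnion (x := χ) h2 h3⟩
    rw [Metric.mem_ball]
    linarith
  have : CompleteSpace C(unitInterval, ℝ) := inferInstance
  have : CompleteSpace (Fin n → Fin (2 * n + 1) → C(unitInterval, ℝ)) := inferInstance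
  have : BaireSpace (Fin n → Fin (2 * n + 1) → C(unitInterval, ℝ)) :=
    BaireSpace.of_completelyPseudoMetrizable
  obtain ⟨Ψ, hΨ⟩ := (dense_biInter_of_isOpen hopen (hSc.mono Set.sdiff_subset) hdense).nonempty
  refine ⟨Ψ, ?_⟩
  let T₀ : (Fin (2 * n + 1) → ℝ →ᵇ ℝ) →ₗ[ℝ] C(Fin n → unitInterval, ℝ) :=
    { toFun := fun χ => KST.sup n (2 * n + 1) χ Ψ
      map_add' := fun a b => by
        ext x
        simp [KST.sup_apply, Finset.sum_add_distrib]
      map_smul' := fun a b => by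
        ext x
        simp [KST.sup_apply, Finset.mul_sum] }
  let T := T₀.mkContinuous D (by
    intro χ
    rw [ContinuousMap.norm_le _ (by positivity)]
    intro x
    change ‖KST.sup n (2 * n + 1) χ Ψ x‖ ≤ _
    rw [KST.sup_apply]
    refine (norm_sum_le _ _).trans ?_
    calc _ ≤ ∑ q : Fin (2 * n + 1), ‖χ‖ := Finset.sum_le_sum fun q _ =>
          ((χ q).norm_coe_le_norm _).trans (norm_le_pi_norm χ q)
      _ = _ := by simp [hD])
  have hDi : 0 < 1 / D := by positivity
  have hDi1 : 1 / D ≤ 1 := by rw [div_le_one hDpos]; exact hD1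
  refine KST.surj T 2 (1 - 1 / D / 4) (by linarith) (by linarith) fun g => ?_
  by_cases hg : g = 0
  · exact ⟨0, by simp [hg]⟩
  have hgpos : 0 < ‖g‖ := norm_pos_iff.2 hg
  obtain ⟨s, hs, hsS⟩ := Metric.dense_iff.1 hSd g (1 / D / 8 * ‖g‖) (by positivity)
  rw [Metric.mem_ball, dist_eq_norm] at hs
  have hs0 : s ≠ 0 := by
    rintro rfl
    rw [zero_sub, norm_neg] at hs
    nlinarith
  have hmem := Set.mem_iInter₂.1 hΨ s ⟨hsS, hs0⟩
  obtain ⟨χ, h1, h2⟩ := Set.mem_iUnion₂.1 hmem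
  have h2 : ‖s - T χ‖ < (1 - 1 / (2 * D)) * ‖s‖ := h2
  have e : 1 / (2 * D) = 1 / D / 2 := by field_simp
  rw [e] at h2
  have hsn : ‖s‖ ≤ ‖g‖ + 1 / D / 8 * ‖g‖ := by
    have := norm_sub_norm_le s g
    linarith
  refine ⟨χ, ?_, ?_⟩
  · refine (pi_norm_le_iff_of_nonneg (by positivity)).2 fun q => (h1 q).trans ?_
    nlinarith
  · have h3 : ‖g - T χ‖ ≤ ‖s - g‖ + ‖s - T χ‖ := by
      rw [norm_sub_rev s g]
      exact norm_sub_le_norm_sub_add_norm_sub _ _ _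
    have h4 : (1 - 1 / D / 2) * ‖s‖ ≤ (1 - 1 / D / 2) * (‖g‖ + 1 / D / 8 * ‖g‖) :=
      mul_le_mul_of_nonneg_left hsn (by linarith)
    have h5 : 0 ≤ 1 / D * (1 / D) * ‖g‖ := by positivity
    nlinarith

/-- Kolmogorov Superposition Theorem: every continuous function on the unit cube
`[0,1]^n` (`n ≥ 2`) can be written as `f(x) = ∑_{q=0}^{2n} χ^q (∑_{p=1}^n ψ^{pq}(x_p))`
with continuous `ψ^{pq} : [0,1] → [0,1]` and continuous `χ^q : ℝ → ℝ`. -/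
theorem kolmogorov_superposition (n : ℕ) (hn : 2 ≤ n)
    (f : (Fin n → ℝ) → ℝ) (hf : ContinuousOn f (Set.Icc 0 1)) :
    ∃ (ψ : Fin n → Fin (2 * n + 1) → ℝ → ℝ) (χ : Fin (2 * n + 1) → ℝ → ℝ),
      (∀ p q, ContinuousOn (ψ p q) (Set.Icc 0 1) ∧
        Set.MapsTo (ψ p q) (Set.Icc 0 1) (Set.Icc 0 1)) ∧
      (∀ q, Continuous (χ q)) ∧
      (∀ x ∈ Set.Icc (0 : Fin n → ℝ) 1,
        f x = ∑ q : Fin (2 * n + 1), χ q (∑ p : Fin n, ψ p q (x p))) := by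
  let F : C(Fin n → unitInterval, ℝ) := ⟨fun x => f (fun p => (x p : ℝ)),
    hf.comp_continuous (by fun_prop) fun x => ⟨fun p => (x p).2.1, fun p => (x p).2.2⟩⟩
  obtain ⟨Ψ, hΨ⟩ := KST.exists_universal n
  obtain ⟨χ, hχ⟩ := hΨ F
  set M : ℝ := ‖Ψ‖ + 1 with hM
  have hMpos : 0 < M := by positivity
  have hb : ∀ p q x, |Ψ p q x| ≤ M := by
    intro p q x
    have h1 : |Ψ p q x| ≤ ‖Ψ p q‖ := (Ψ p q).norm_coe_le_norm x
    have h2 : ‖Ψ p q‖ ≤ ‖Ψ‖ := (norm_le_pi_norm (Ψ p) q).trans (norm_le_pi_norm Ψ p)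
    linarith
  refine ⟨fun p q x => (Ψ p q (Set.projIcc 0 1 zero_le_one x) + M) / (2 * M),
    fun q t => χ q (2 * M * t - n * M), ?_, ?_, ?_⟩
  · intro p q
    constructor
    · apply Continuous.continuousOn
      have : Continuous fun x : ℝ => Ψ p q (Set.projIcc 0 1 zero_le_one x) :=
        (Ψ p q).continuous.comp continuous_projIcc
      fun_prop
    · intro x _
      have h := abs_le.1 (hb p q (Set.projIcc 0 1 zero_le_one x))
      refine ⟨div_nonneg (by linarith) (by positivity), ?_⟩
      rw [div_le_one (by positivity)]
      linarith
  · intro q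
    fun_prop
  · intro x hx
    have h := congrArg (fun G => G (fun p => Set.projIcc 0 1 zero_le_one (x p))) hχ
    simp only [KST.sup_apply] at h
    have e : F (fun p => Set.projIcc 0 1 zero_le_one (x p)) = f x := by
      change f _ = f x
      congr 1
      funext p
      exact congrArg Subtype.val (Set.projIcc_of_mem zero_le_one (⟨hx.1 p, hx.2 p⟩ : x p ∈ Set.Icc (0 : ℝ) 1))
    rw [← e, ← h]
    refine Finset.sum_congr rfl fun q _ => ?_
    congr 1
    rw [← Finset.sum_div, Finset.sum_add_distrib, Finset.sum_const, Finset.card_univ,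
      Fintype.card_fin, nsmul_eq_mul]
    field_simp
    ring
end

section
/- For every n ≥ 2, there exist functions ψ^{pq} : [0,1] → [0,1] (for p ∈ {1,…,n}, q ∈ {0,…,2n}), each Lipschitz continuous with Lipschitz constant 1 and independent of any target function, such that for every continuous function f : [0,1]^n → ℝ there exist continuous functions χ^q : ℝ → ℝ (for q ∈ {0,…,2n}) with f(x_1,…,x_n) = Σ_{q=0}^{2n} χ^q( Σ_{p=1}^n ψ^{pq}(x_p) ) for all (x_1,…,x_n) ∈ [0,1]^n. -/
namespace KSL

open BoundedContinuousFunction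

/-- a monotone staircase: `⌊s⌋ + min 1 (m * fract s)` -/
noncomputable def stair (m : ℝ) (s : ℝ) : ℝ := s + (min 1 (m * Int.fract s) - Int.fract s)

lemma stair_eq (m s : ℝ) : stair m s = ⌊s⌋ + min 1 (m * Int.fract s) := by
  have := Int.floor_add_fract s
  unfold stair; linarith

lemma stair_cont (m : ℝ) (hm : 1 ≤ m) : Continuous (stair m) := by
  have h : ContinuousOn (fun u : ℝ => min 1 (m * u) - u) (Set.Icc 0 1) := by fun_prop
  have := h.comp_fract'' (by simp [hm])
  unfold stair
  exact continuous_id.add this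

lemma stair_mono (m : ℝ) (hm : 1 ≤ m) : Monotone (stair m) := by
  intro s t hst
  rw [stair_eq, stair_eq]
  rcases (Int.floor_mono hst).eq_or_lt with h | h
  · have h1 := Int.floor_add_fract s
    have h2 := Int.floor_add_fract t
    have : Int.fract s ≤ Int.fract t := by rw [h] at h1; linarith
    rw [h]
    gcongr
  · have h1 : ((⌊s⌋ : ℝ) + 1) ≤ ⌊t⌋ := by exact_mod_cast h
    have h2 : min 1 (m * Int.fract s) ≤ 1 := min_le_left _ _
    have h3 : 0 ≤ min 1 (m * Int.fract t) :=
      le_min zero_le_one (mul_nonneg (by linarith) (Int.fract_nonneg _))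
    linarith

lemma stair_near (m : ℝ) (hm : 1 ≤ m) (s : ℝ) : |stair m s - s| ≤ 1 := by
  unfold stair
  have h0 := Int.fract_nonneg s
  have h1 := (Int.fract_lt_one s).le
  have h2 : min 1 (m * Int.fract s) ≤ 1 := min_le_left _ _
  have h3 : 0 ≤ min 1 (m * Int.fract s) :=
      le_min zero_le_one (mul_nonneg (by linarith) h0)
  rw [abs_le]; constructor <;> linarith

/-- `t` is in the `q`-th gap -/
def Bad (m : ℕ) (t : ℝ) (q : ℕ) : Prop :=
  0 < Int.fract (t - q / m) ∧ Int.fract (t - q / m) < 1 / m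

lemma stair_good (m : ℕ) (hm : 1 ≤ m) (t : ℝ) (q : ℕ) (h : ¬ Bad m t q) :
    stair m (t - q / m) = (⌈t - q / m⌉ : ℤ) := by
  have hm' : (0 : ℝ) < m := by exact_mod_cast hm
  rw [stair_eq]
  set s := t - (q : ℝ) / m with hs
  rcases (Int.fract_nonneg s).eq_or_lt with h0 | h0
  · rw [← h0]
    obtain ⟨z, hz⟩ := Int.fract_eq_zero_iff.1 h0.symm
    rw [← hz]; simp
  · have h1 : 1 / (m : ℝ) ≤ Int.fract s := by
      by_contra hc; exact h ⟨h0, not_le.1 hc⟩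
    rw [div_le_iff₀ hm'] at h1
    rw [min_eq_left (by linarith)]
    have : ⌈s⌉ = ⌊s⌋ + 1 := by
      rw [Int.ceil_eq_iff]
      have := Int.floor_add_fract s
      have := Int.fract_lt_one s
      push_cast
      constructor <;> linarith
    rw [this]; push_cast; rfl

lemma bad_unique (m : ℕ) (t : ℝ) (q q' : ℕ) (hq : q < m) (hq' : q' < m)
    (h : Bad m t q) (h' : Bad m t q') : q = q' := by
  have hm : (0 : ℝ) < m := by exact_mod_cast (by omega : 0 < m)
  obtain ⟨a1, a2⟩ := h
  obtain ⟨b1, b2⟩ := h'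
  have e1 := Int.floor_add_fract (t - (q : ℝ) / m)
  have e2 := Int.floor_add_fract (t - (q' : ℝ) / m)
  set u := Int.fract (t - (q : ℝ) / m)
  set v := Int.fract (t - (q' : ℝ) / m)
  set a := ⌊t - (q : ℝ) / m⌋
  set b := ⌊t - (q' : ℝ) / m⌋
  rw [lt_div_iff₀ hm] at a2 b2
  have key : ((q' : ℝ) - q - m * (a - b)) = m * u - m * v := by
    have : (q' : ℝ) / m - q / m = a - b + (u - v) := by linarith
    field_simp at this
    linarith
  have p1 : 0 < m * u := by positivity
  have p2 : 0 < m * v := by positivity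
  have k1 : ((q' : ℝ) - q - m * (a - b)) < 1 := by nlinarith
  have k2 : -1 < ((q' : ℝ) - q - m * (a - b)) := by nlinarith
  have k1' : ((q' : ℤ) - q - m * (a - b)) < 1 := by exact_mod_cast k1
  have k2' : -1 < ((q' : ℤ) - q - m * (a - b)) := by exact_mod_cast k2
  have k3 : ((q' : ℤ) - q) = m * (a - b) := by omega
  have : (q : ℤ) ≡ q' [ZMOD m] := (Int.modEq_iff_dvd).2 ⟨_, k3⟩
  have := (Int.natCast_modEq_iff).1 this
  exact Nat.ModEq.eq_of_lt_of_lt this hq hq'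

/-- generic perturbation parameter -/
lemma exists_generic {n : ℕ} {Q : Type*} [Countable Q] (A : Q → (Fin n → ℤ) → ℝ) (η : ℝ) (hη : 0 < η) :
    ∃ c, 0 < c ∧ c < η ∧ ∀ q (j k : Fin n → ℤ),
      A q j + ∑ p, c ^ (p.1 + 1) * j p = A q k + ∑ p, c ^ (p.1 + 1) * k p → j = k := by
  let P : Q × (Fin n → ℤ) × (Fin n → ℤ) → Polynomial ℝ := fun x =>
    Polynomial.C (A x.1 x.2.1 - A x.1 x.2.2) +
      ∑ p : Fin n, Polynomial.C ((x.2.1 p : ℝ) - x.2.2 p) * Polynomial.X ^ (p.1 + 1)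
  let B : Set ℝ := ⋃ x, ((P x).roots.toFinset : Set ℝ)
  have hB : B.Countable := Set.countable_iUnion fun x => (Finset.finite_toSet _).countable
  have : ∃ c ∈ Set.Ioo 0 η, c ∉ B := by
    by_contra hc
    push Not at hc
    have : (Set.Ioo 0 η).Countable := hB.mono hc
    exact (Cardinal.Real.Ioo_countable_iff.1 this).not_gt hη
  obtain ⟨c, hc, hcB⟩ := this
  refine ⟨c, hc.1, hc.2, fun q j k h => ?_⟩
  by_contra hjk
  apply hcB
  refine Set.mem_iUnion.2 ⟨(q, j, k), ?_⟩
  simp only [Finset.mem_coe, Multiset.mem_toFinset]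
  rw [Polynomial.mem_roots']
  constructor
  · obtain ⟨p, hp⟩ := Function.ne_iff.1 hjk
    intro h0
    have := congrArg (fun P => Polynomial.coeff P (p.1 + 1)) h0
    simp only [P, Polynomial.coeff_add, Polynomial.finsetSum_coeff, Polynomial.coeff_C_mul,
      Polynomial.coeff_X_pow, Polynomial.coeff_C, Polynomial.coeff_zero] at this
    rw [Finset.sum_eq_single p] at this
    · simp at this
      apply hp
      have h2 : (j p : ℝ) = k p := by linarith
      exact_mod_cast h2
    · intro b _ hb
      simp
      intro h; exact absurd (Fin.ext h.symm) hb
    · simp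
  · simp only [P, Polynomial.IsRoot.def, Polynomial.eval_add, Polynomial.eval_C,
      Polynomial.eval_finsetSum, Polynomial.eval_mul, Polynomial.eval_pow, Polynomial.eval_X]
    have : ∑ p : Fin n, ((j p : ℝ) - k p) * c ^ (p.1 + 1) =
        ∑ p, c ^ (p.1 + 1) * j p - ∑ p, c ^ (p.1 + 1) * k p := by
      rw [← Finset.sum_sub_distrib]
      exact Finset.sum_congr rfl fun p _ => by ring
    rw [this]; linarith

abbrev Inner (n : ℕ) := Fin n → Fin (2 * n + 1) → C(unitInterval, ℝ)
abbrev Cube (n : ℕ) := Fin n → unitInterval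

def ev {n : ℕ} (p : Fin n) : C(Cube n, unitInterval) := ⟨fun x => x p, by fun_prop⟩

noncomputable def S {n : ℕ} (φ : Inner n) (q : Fin (2 * n + 1)) : C(Cube n, ℝ) :=
  ∑ p, (φ p q).comp (ev p)

lemma S_apply {n : ℕ} (φ : Inner n) (q) (x : Cube n) : S φ q x = ∑ p, φ p q (x p) := by
  simp [S, ev]

lemma S_cont {n : ℕ} (q : Fin (2 * n + 1)) : Continuous fun φ : Inner n => S φ q := by
  unfold S
  refine continuous_finsetSum _ fun p _ => ?_
  exact (ContinuousMap.continuous_precomp (ev p)).comp (by fun_prop)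

noncomputable def T {n : ℕ} (φ : Inner n) (χ : Fin (2 * n + 1) → ℝ →ᵇ ℝ) : C(Cube n, ℝ) :=
  ∑ q, (χ q).toContinuousMap.comp (S φ q)

lemma T_apply {n : ℕ} (φ : Inner n) (χ) (x : Cube n) :
    T φ χ x = ∑ q, χ q (∑ p, φ p q (x p)) := by
  simp [T, S_apply]

lemma T_cont {n : ℕ} (χ : Fin (2 * n + 1) → ℝ →ᵇ ℝ) : Continuous fun φ : Inner n => T φ χ := by
  unfold T
  refine continuous_finsetSum _ fun q _ => ?_
  exact (ContinuousMap.continuous_postcomp _).comp (S_cont q)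

def MonoSet (n : ℕ) : Set (Inner n) := {φ | ∀ p q, Monotone (φ p q)}

lemma MonoSet_closed (n : ℕ) : IsClosed (MonoSet n) := by
  have : MonoSet n = ⋂ (p) (q) (x : unitInterval) (y : unitInterval) (_ : x ≤ y),
      {φ : Inner n | φ p q x ≤ φ p q y} := by
    ext φ; simp only [MonoSet, Monotone, Set.mem_iInter, Set.mem_ofPred_eq]
  rw [this]
  refine isClosed_iInter fun p => isClosed_iInter fun q => isClosed_iInter fun x =>
    isClosed_iInter fun y => isClosed_iInter fun _ => isClosed_le ?_ ?_
  · exact (continuous_eval_const x).comp (by fun_prop)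
  · exact (continuous_eval_const y).comp (by fun_prop)

noncomputable def θ (n : ℕ) : ℝ := (4 * n + 1) / (4 * n + 2)

def USet {n : ℕ} (f : C(Cube n, ℝ)) : Set (Inner n) :=
  {φ | ∃ χ : Fin (2 * n + 1) → ℝ →ᵇ ℝ, (∀ q, ‖χ q‖ ≤ ‖f‖) ∧ ‖f - T φ χ‖ < θ n * ‖f‖}

lemma USet_open {n : ℕ} (f : C(Cube n, ℝ)) : IsOpen (USet f) := by
  have : USet f = ⋃ (χ : Fin (2 * n + 1) → ℝ →ᵇ ℝ) (_ : ∀ q, ‖χ q‖ ≤ ‖f‖),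
      {φ | ‖f - T φ χ‖ < θ n * ‖f‖} := by
    ext φ; simp [USet]
  rw [this]
  refine isOpen_iUnion fun χ => isOpen_iUnion fun _ => isOpen_lt ?_ continuous_const
  exact (continuous_const.sub (T_cont χ)).norm

lemma theta_lt (n : ℕ) : θ n < 1 := by
  unfold θ; rw [div_lt_one (by positivity)]; linarith
lemma theta_pos (n : ℕ) : 0 < θ n := by
  unfold θ; positivity

/-- the perturbed inner function -/
noncomputable def pert {n : ℕ} (φ : Inner n) (N : ℕ) (c : ℝ) : Inner n := fun p q =>
  { toFun := fun x => φ p q (Set.projIcc 0 1 zero_le_one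
        (stair ((2 * n + 1 : ℕ) : ℝ) (N * (x : ℝ) - q.1 / ((2 * n + 1 : ℕ) : ℝ)) / N)) +
        c ^ (p.1 + 1) * stair ((2 * n + 1 : ℕ) : ℝ) (N * (x : ℝ) - q.1 / ((2 * n + 1 : ℕ) : ℝ))
    continuous_toFun := by
      have h := stair_cont ((2 * n + 1 : ℕ) : ℝ) (by exact_mod_cast (by omega : 1 ≤ 2 * n + 1))
      have h2 : Continuous fun x : unitInterval => stair ((2 * n + 1 : ℕ) : ℝ)
          (N * (x : ℝ) - q.1 / ((2 * n + 1 : ℕ) : ℝ)) := h.comp (by fun_prop)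
      have h3 : Continuous (Set.projIcc (0 : ℝ) 1 zero_le_one) := continuous_projIcc
      exact ((φ p q).continuous.comp (h3.comp (h2.div_const _))).add (continuous_const.mul h2) }

lemma pert_apply {n : ℕ} (φ : Inner n) (N : ℕ) (c : ℝ) (p) (q) (x : unitInterval) :
    pert φ N c p q x = φ p q (Set.projIcc 0 1 zero_le_one
        (stair ((2 * n + 1 : ℕ) : ℝ) (N * (x : ℝ) - q.1 / ((2 * n + 1 : ℕ) : ℝ)) / N)) +
        c ^ (p.1 + 1) * stair ((2 * n + 1 : ℕ) : ℝ) (N * (x : ℝ) - q.1 / ((2 * n + 1 : ℕ) : ℝ)) := rfl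

lemma pert_mono {n : ℕ} (φ : Inner n) (hφ : φ ∈ MonoSet n) (N : ℕ) (c : ℝ) (hc : 0 < c) :
    pert φ N c ∈ MonoSet n := by
  intro p q x y hxy
  rw [pert_apply, pert_apply]
  have h : stair ((2 * n + 1 : ℕ) : ℝ) (N * (x : ℝ) - q.1 / ((2 * n + 1 : ℕ) : ℝ)) ≤
      stair ((2 * n + 1 : ℕ) : ℝ) (N * (y : ℝ) - q.1 / ((2 * n + 1 : ℕ) : ℝ)) := by
    apply stair_mono _ (by exact_mod_cast (by omega : 1 ≤ 2 * n + 1))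
    have : (x : ℝ) ≤ y := hxy
    gcongr
  refine add_le_add (hφ p q (Set.monotone_projIcc _ ?_)) ?_
  · gcongr
  · gcongr

lemma stair_bd {n : ℕ} (N : ℕ) (q : Fin (2 * n + 1)) (x : unitInterval) :
    |stair ((2 * n + 1 : ℕ) : ℝ) (N * (x : ℝ) - q.1 / ((2 * n + 1 : ℕ) : ℝ)) - N * x| ≤ 2 := by
  have h := stair_near ((2 * n + 1 : ℕ) : ℝ) (by exact_mod_cast (by omega : 1 ≤ 2 * n + 1))
    (N * (x : ℝ) - q.1 / ((2 * n + 1 : ℕ) : ℝ))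
  have h1 : (q.1 : ℝ) / ((2 * n + 1 : ℕ) : ℝ) ≤ 1 := by
    rw [div_le_one (by positivity)]
    exact_mod_cast q.2.le
  have h2 : 0 ≤ (q.1 : ℝ) / ((2 * n + 1 : ℕ) : ℝ) := by positivity
  rw [abs_le] at h ⊢
  constructor <;> linarith

lemma stair_bd2 {n : ℕ} (N : ℕ) (q : Fin (2 * n + 1)) (x : unitInterval) :
    |stair ((2 * n + 1 : ℕ) : ℝ) (N * (x : ℝ) - q.1 / ((2 * n + 1 : ℕ) : ℝ))| ≤ N + 2 := by
  have h := stair_bd N q x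
  have h1 : (N : ℝ) * x ≤ N := mul_le_of_le_one_right (by positivity) x.2.2
  have h2 : 0 ≤ (N : ℝ) * x := mul_nonneg (by positivity) x.2.1
  rw [abs_le] at h ⊢
  constructor <;> linarith

/-- closeness -/
lemma pert_near {n : ℕ} (φ : Inner n) (ε : ℝ) (hε : 0 < ε) :
    ∃ N₀ : ℕ, ∀ N : ℕ, N₀ ≤ N → ∃ η > 0, ∀ c, 0 < c → c < η → dist (pert φ N c) φ < ε := by
  have huc : UniformContinuous fun x : unitInterval => fun p q => φ p q x :=
    CompactSpace.uniformContinuous_of_continuous (by fun_prop)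
  obtain ⟨δ, hδ, H⟩ := Metric.uniformContinuous_iff.1 huc (ε / 2) (by positivity)
  obtain ⟨N₀, hN₀⟩ := exists_nat_gt (2 / δ)
  refine ⟨N₀, fun N hN => ⟨min 1 (ε / 2 / (N + 2)), by positivity, fun c hc0 hc => ?_⟩⟩
  have hNp : (0 : ℝ) < N := by
    have : (0 : ℝ) < 2 / δ := by positivity
    have : (N₀ : ℝ) ≤ N := by exact_mod_cast hN
    linarith
  have hNδ : 2 / (N : ℝ) < δ := by
    have : (N₀ : ℝ) ≤ N := by exact_mod_cast hN
    rw [div_lt_iff₀ hδ] at hN₀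
    rw [div_lt_iff₀ hNp]
    nlinarith
  refine (dist_pi_lt_iff hε).2 fun p => (dist_pi_lt_iff hε).2 fun q => ?_
  refine (ContinuousMap.dist_lt_iff hε).2 fun x => ?_
  rw [pert_apply, Real.dist_eq]
  have hs := stair_bd N q x
  have hs2 := stair_bd2 N q x
  set r := stair ((2 * n + 1 : ℕ) : ℝ) (N * (x : ℝ) - q.1 / ((2 * n + 1 : ℕ) : ℝ))
  have h1 : dist (Set.projIcc (0 : ℝ) 1 zero_le_one (r / N)) x < δ := by
    have hx : Set.projIcc (0 : ℝ) 1 zero_le_one (x : ℝ) = x := Set.projIcc_val _ x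
    have hl : dist (Set.projIcc (0 : ℝ) 1 zero_le_one (r / N)) (Set.projIcc (0 : ℝ) 1 zero_le_one (x : ℝ))
        ≤ dist (r / N) (x : ℝ) := by
      rw [Subtype.dist_eq, Real.dist_eq, Real.dist_eq]
      exact Set.abs_projIcc_sub_projIcc _
    rw [hx] at hl
    refine hl.trans_lt (lt_of_le_of_lt ?_ hNδ)
    rw [Real.dist_eq]
    have : r / N - x = (r - N * x) / N := by field_simp
    rw [this, abs_div, abs_of_pos hNp]
    gcongr
  have h2 := (dist_pi_lt_iff (by positivity)).1 ((dist_pi_lt_iff (by positivity)).1 (H h1) p) q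
  rw [Real.dist_eq] at h2
  have hc1 : c < 1 := hc.trans_le (min_le_left _ _)
  have hc2 : c * (N + 2) < ε / 2 := by
    rw [← lt_div_iff₀ (by positivity)]; exact hc.trans_le (min_le_right _ _)
  have h3 : |c ^ (p.1 + 1) * r| < ε / 2 := by
    refine lt_of_le_of_lt ?_ hc2
    rw [abs_mul, abs_of_pos (by positivity)]
    have : c ^ (p.1 + 1) ≤ c := pow_le_of_le_one hc0.le hc1.le (by omega)
    gcongr
  rw [abs_lt] at h2 h3 ⊢
  constructor <;> linarith

/-- existence of the outer functions for a good perturbation, single `q` -/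
lemma exists_outer {X : Type*} (G : Set X) (s f : X → ℝ) (hfin : (s '' G).Finite) (B : ℝ) (hB0 : 0 ≤ B)
    (hB : ∀ x, |f x| ≤ B) (ω : ℝ)
    (hs : ∀ x ∈ G, ∀ y ∈ G, s x = s y → |f x - f y| ≤ ω) :
    ∃ χ : ℝ →ᵇ ℝ, ‖χ‖ ≤ B ∧ ∀ x ∈ G, |f x - χ (s x)| ≤ ω := by
  classical
  have : Finite (s '' G) := hfin
  choose g hg hgs using fun y : s '' G => y.2
  let u : (s '' G) →ᵇ ℝ := BoundedContinuousFunction.mkOfDiscrete (fun y => f (g y)) (2 * B) (by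
    intro a b
    rw [Real.dist_eq]
    have := hB (g a)
    have := hB (g b)
    rw [abs_le] at *
    constructor <;> linarith)
  obtain ⟨χ, hχ, hr⟩ := BoundedContinuousFunction.exists_norm_eq_domRestrict_eq_of_closed u hfin.isClosed
  refine ⟨χ, ?_, fun x hx => ?_⟩
  · rw [hχ]
    exact (BoundedContinuousFunction.norm_le hB0).2 fun y => hB _
  · have h1 := congrArg (fun w => w ⟨s x, x, hx, rfl⟩) hr
    have h2 : χ (s x) = f (g ⟨s x, x, hx, rfl⟩) := h1
    rw [h2]
    exact hs x hx _ (hg _) (hgs ⟨s x, x, hx, rfl⟩).symm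

lemma bad_card {n : ℕ} (N : ℕ) (x : Cube n) [DecidablePred fun q : Fin (2 * n + 1) =>
      ∃ p, Bad (2 * n + 1) (N * (x p : ℝ)) q.1] :
    (Finset.univ.filter fun q : Fin (2 * n + 1) =>
      ∃ p, Bad (2 * n + 1) (N * (x p : ℝ)) q.1).card ≤ n := by
  classical
  have : ∀ q : Fin (2 * n + 1), ∃ p : Option (Fin n), (∃ p, Bad (2 * n + 1) (N * (x p : ℝ)) q.1) →
      ∃ p', p = some p' ∧ Bad (2 * n + 1) (N * (x p' : ℝ)) q.1 := by
    intro q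
    by_cases h : ∃ p, Bad (2 * n + 1) (N * (x p : ℝ)) q.1
    · obtain ⟨p, hp⟩ := h
      exact ⟨some p, fun _ => ⟨p, rfl, hp⟩⟩
    · exact ⟨none, fun h' => absurd h' h⟩
  choose F hF using this
  have hle := Finset.card_le_card_of_injOn (t := (Finset.univ : Finset (Fin n)).image some) F
    (s := Finset.univ.filter fun q : Fin (2 * n + 1) =>
      ∃ p, Bad (2 * n + 1) (N * (x p : ℝ)) q.1) ?_ ?_
  · refine hle.trans (Finset.card_image_le.trans ?_)
    simp
  · intro q hq
    obtain ⟨p, hp, _⟩ := hF q (by simpa using hq)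
    simp [hp]
  · intro q hq q' hq' h
    obtain ⟨p, hp, hb⟩ := hF q (by simpa using hq)
    obtain ⟨p', hp', hb'⟩ := hF q' (by simpa using hq')
    rw [hp, hp'] at h
    obtain rfl := Option.some.inj h
    exact Fin.ext (bad_unique _ _ _ _ q.2 q'.2 hb hb')

lemma dense_step {n : ℕ} (f : C(Cube n, ℝ)) (hf : f ≠ 0) (φ : Inner n) (hφ : φ ∈ MonoSet n)
    (ε : ℝ) (hε : 0 < ε) : ∃ φ' ∈ MonoSet n, dist φ' φ < ε ∧ φ' ∈ USet f := by
  classical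
  have hf0 : 0 < ‖f‖ := norm_pos_iff.2 hf
  obtain ⟨N₀, hN₀⟩ := pert_near φ ε hε
  have huc : UniformContinuous f := CompactSpace.uniformContinuous_of_continuous f.continuous
  obtain ⟨δ, hδ, H⟩ := Metric.uniformContinuous_iff.1 huc (‖f‖ / (4 * (2 * n + 1))) (by positivity)
  obtain ⟨N₁, hN₁⟩ := exists_nat_gt (1 / δ)
  set N := max N₀ N₁ with hN
  obtain ⟨η, hη, hN₀⟩ := hN₀ N (le_max_left _ _)
  have hN₁' : (N₁ : ℝ) ≤ N := by exact_mod_cast le_max_right _ _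
  have hNp : (0 : ℝ) < N := by
    have : (0 : ℝ) < 1 / δ := by positivity
    linarith
  have hNδ : 1 / (N : ℝ) < δ := by
    rw [div_lt_iff₀ hδ] at hN₁
    rw [div_lt_iff₀ hNp]
    nlinarith
  obtain ⟨c, hc0, hc1, hc⟩ := exists_generic (n := n) (Q := Fin (2 * n + 1))
    (fun q j => ∑ p, φ p q (Set.projIcc 0 1 zero_le_one ((j p : ℝ) / N))) η hη
  refine ⟨pert φ N c, pert_mono φ hφ N c hc0, hN₀ c hc0 hc1, ?_⟩
  set m : ℕ := 2 * n + 1 with hm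
  have hmp : (0 : ℝ) < m := by positivity
  let G : Fin m → Set (Cube n) := fun q => {x | ∀ p, ¬ Bad m (N * (x p : ℝ)) q.1}
  let J : Fin m → Cube n → Fin n → ℤ := fun q x p => ⌈(N * (x p : ℝ)) - q.1 / (m : ℝ)⌉
  let V : Fin m → (Fin n → ℤ) → ℝ := fun q j =>
    ∑ p, φ p q (Set.projIcc 0 1 zero_le_one ((j p : ℝ) / N)) + ∑ p : Fin n, c ^ (p.1 + 1) * j p
  have hst : ∀ q, ∀ x ∈ G q, ∀ p,
      stair (m : ℝ) (N * (x p : ℝ) - q.1 / (m : ℝ)) = (J q x p : ℝ) := fun q x hx p =>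
    stair_good m (by omega) _ _ (hx p)
  have hSV : ∀ q, ∀ x ∈ G q, S (pert φ N c) q x = V q (J q x) := by
    intro q x hx
    rw [S_apply]
    simp only [V, ← Finset.sum_add_distrib]
    refine Finset.sum_congr rfl fun p _ => ?_
    have h' : stair ((2 * n + 1 : ℕ) : ℝ) (N * (x p : ℝ) - q.1 / ((2 * n + 1 : ℕ) : ℝ)) = J q x p :=
      hst q x hx p
    rw [pert_apply, h']
  have hfin : ∀ q, (S (pert φ N c) q '' G q).Finite := by
    intro q
    have hJ : (Set.Icc (fun _ => -((N : ℤ) + 2)) (fun _ => (N : ℤ) + 2) : Set (Fin n → ℤ)).Finite :=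
      Set.finite_Icc _ _
    refine (hJ.image (V q)).subset ?_
    rintro _ ⟨x, hx, rfl⟩
    refine ⟨J q x, ?_, (hSV q x hx).symm⟩
    have hb : ∀ p, -((N : ℤ) + 2) ≤ J q x p ∧ J q x p ≤ (N : ℤ) + 2 := by
      intro p
      have := stair_bd2 N q (x p)
      have h' : stair ((2 * n + 1 : ℕ) : ℝ) (N * (x p : ℝ) - q.1 / ((2 * n + 1 : ℕ) : ℝ)) = J q x p :=
        hst q x hx p
      rw [h', abs_le] at this
      exact_mod_cast this
    exact ⟨fun p => (hb p).1, fun p => (hb p).2⟩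
  have hclose : ∀ q, ∀ x ∈ G q, ∀ y ∈ G q, S (pert φ N c) q x = S (pert φ N c) q y →
      |f x - f y| ≤ ‖f‖ / (4 * (2 * n + 1)) := by
    intro q x hx y hy h
    rw [hSV q x hx, hSV q y hy] at h
    have hJ := hc q _ _ h
    have hd : dist x y < δ := by
      refine (dist_pi_lt_iff hδ).2 fun p => lt_of_le_of_lt ?_ hNδ
      have e := congrFun hJ p
      simp only [J] at e
      have a1 := Int.le_ceil ((N * (x p : ℝ)) - q.1 / (m : ℝ))
      have a2 := Int.ceil_lt_add_one ((N * (x p : ℝ)) - q.1 / (m : ℝ))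
      have b1 := Int.le_ceil ((N * (y p : ℝ)) - q.1 / (m : ℝ))
      have b2 := Int.ceil_lt_add_one ((N * (y p : ℝ)) - q.1 / (m : ℝ))
      rw [e] at a1 a2
      rw [Subtype.dist_eq, Real.dist_eq, le_div_iff₀ hNp, ← abs_of_pos hNp, ← abs_mul, abs_le]
      constructor <;> linarith
    have := H hd
    rw [Real.dist_eq] at this
    exact this.le
  have hfb : ∀ x, |f x| ≤ ‖f‖ := fun x => f.norm_coe_le_norm x
  choose χ hχ hχf using fun q => exists_outer (G q) (S (pert φ N c) q) (fun x => f x / m) (hfin q)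
    (‖f‖ / m) (by positivity) (fun x => by rw [abs_div, abs_of_pos hmp]; gcongr; exact hfb x)
    (‖f‖ / (4 * (2 * n + 1)) / m) (fun x hx y hy h => by
      rw [← sub_div, abs_div, abs_of_pos hmp]
      gcongr
      exact hclose q x hx y hy h)
  refine ⟨χ, fun q => (hχ q).trans (div_le_self hf0.le ?_), ?_⟩
  · exact_mod_cast (by omega : 1 ≤ m)
  have hbound : ∀ x, |(f - T (pert φ N c) χ) x| ≤ ‖f‖ / m * (2 * n + 1 / 4) := by
    intro x
    have e : (f - T (pert φ N c) χ) x = ∑ q : Fin m, (f x / m - χ q (S (pert φ N c) q x)) := by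
      rw [ContinuousMap.sub_apply, T_apply, Finset.sum_sub_distrib]
      simp only [S_apply]
      congr 1
      simp
      field_simp
    rw [e]
    refine (Finset.abs_sum_le_sum_abs _ _).trans ?_
    have hq : ∀ q : Fin m, |f x / m - χ q (S (pert φ N c) q x)| ≤
        ‖f‖ / (4 * (2 * n + 1)) / m + if ∃ p, Bad m (N * (x p : ℝ)) q.1 then 2 * (‖f‖ / m) else 0 := by
      intro q
      have hpos : 0 ≤ ‖f‖ / (4 * (2 * n + 1)) / m := by positivity
      split_ifs with h
      · have h1 : |f x / m| ≤ ‖f‖ / m := by rw [abs_div, abs_of_pos hmp]; gcongr; exact hfb x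
        have h2 : |χ q (S (pert φ N c) q x)| ≤ ‖f‖ / m :=
          ((χ q).norm_coe_le_norm _).trans (hχ q)
        rw [abs_le] at h1 h2 ⊢
        constructor <;> linarith
      · push Not at h
        rw [add_zero]
        exact hχf q x h
    refine (Finset.sum_le_sum fun q _ => hq q).trans ?_
    rw [Finset.sum_add_distrib, ← Finset.sum_filter, Finset.sum_const, Finset.sum_const]
    have hcard := bad_card N x
    rw [← hm] at hcard
    have hcard' : ((Finset.univ.filter fun q : Fin m =>
      ∃ p, Bad m (N * (x p : ℝ)) q.1).card : ℝ) ≤ n := by exact_mod_cast hcard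
    simp only [Finset.card_univ, Fintype.card_fin, nsmul_eq_mul]
    have e1 : (m : ℝ) * (‖f‖ / (4 * (2 * n + 1)) / m) = ‖f‖ / m * (1 / 4) := by
      rw [hm]; push_cast; field_simp
    rw [e1]
    have : 0 ≤ 2 * (‖f‖ / m) := by positivity
    nlinarith
  have hle : ‖f - T (pert φ N c) χ‖ ≤ ‖f‖ / m * (2 * n + 1 / 4) :=
    (ContinuousMap.norm_le _ (by positivity)).2 hbound
  refine hle.trans_lt ?_
  unfold θ
  rw [div_mul_eq_mul_div, div_mul_eq_mul_div, hm]
  push_cast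
  rw [div_lt_div_iff₀ (by positivity) (by positivity)]
  have : (0:ℝ) ≤ n := by positivity
  nlinarith [mul_pos hf0 hf0, mul_nonneg hf0.le this]

lemma T_add_sub {n : ℕ} (φ : Inner n) (χ χ' : Fin (2 * n + 1) → ℝ →ᵇ ℝ) :
    T φ (χ + χ') = T φ χ + T φ χ' := by
  ext x; simp [T_apply, Finset.sum_add_distrib]

/-- there is a universal family -/
lemma exists_universal (n : ℕ) : ∃ φ ∈ MonoSet n, ∀ f : C(Cube n, ℝ), f ≠ 0 → φ ∈ USet f ∨
    ∃ χ : Fin (2 * n + 1) → ℝ →ᵇ ℝ, (∀ q, ‖χ q‖ ≤ 2 * ‖f‖) ∧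
      ‖f - T φ χ‖ ≤ (1 + θ n) / 2 * ‖f‖ := by
  have : CompleteSpace (MonoSet n) := (MonoSet_closed n).completeSpace_coe
  have : Nonempty (MonoSet n) := ⟨⟨0, fun p q x y _ => le_rfl⟩⟩
  obtain ⟨D, hDc, hDd⟩ := TopologicalSpace.exists_countable_dense C(Cube n, ℝ)
  have hd : Dense (⋂ g ∈ D \ {0}, ((↑) ⁻¹' USet g : Set (MonoSet n))) := by
    refine dense_biInter_of_isOpen (fun g _ => (USet_open g).preimage continuous_subtype_val)
      (hDc.mono Set.sdiff_subset) fun g hg => ?_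
    refine Metric.dense_iff.2 fun φ r hr => ?_
    obtain ⟨φ', h1, h2, h3⟩ := dense_step g hg.2 φ.1 φ.2 r hr
    exact ⟨⟨φ', h1⟩, h2, h3⟩
  obtain ⟨φ, hφ⟩ := hd.nonempty
  refine ⟨φ.1, φ.2, fun f hf => Or.inr ?_⟩
  have hf0 : 0 < ‖f‖ := norm_pos_iff.2 hf
  have h1 := theta_lt n
  have h2 := theta_pos n
  obtain ⟨g, hgD, hg⟩ := hDd.exists_dist_lt f (ε := (1 - θ n) / 4 * ‖f‖)
    (mul_pos (by linarith) hf0)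
  rw [dist_eq_norm] at hg
  have hfg : ‖f‖ ≤ ‖g‖ + ‖f - g‖ := by
    have := norm_add_le g (f - g); rwa [add_sub_cancel] at this
  have hgf : ‖g‖ ≤ ‖f‖ + ‖f - g‖ := by
    have := norm_sub_le f (f - g); rwa [sub_sub_cancel] at this
  have hg0 : g ≠ 0 := by
    rintro rfl
    simp at hg
    nlinarith
  obtain ⟨χ, hχ, hT⟩ := Set.mem_iInter₂.1 hφ g ⟨hgD, hg0⟩
  refine ⟨χ, fun q => (hχ q).trans (by nlinarith), ?_⟩
  have h3 : ‖f - T φ.1 χ‖ ≤ ‖f - g‖ + ‖g - T φ.1 χ‖ := norm_sub_le_norm_sub_add_norm_sub _ _ _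
  have h4 : θ n * ‖g‖ ≤ θ n * (‖f‖ + (1 - θ n) / 4 * ‖f‖) := by gcongr; linarith
  have h5 : θ n * ((1 - θ n) / 4 * ‖f‖) ≤ 1 * ((1 - θ n) / 4 * ‖f‖) := by
    apply mul_le_mul_of_nonneg_right h1.le
    exact mul_nonneg (by linarith) hf0.le
  nlinarith

lemma T_surj {n : ℕ} (φ : Inner n) (r : ℝ) (hr0 : 0 ≤ r) (hr : r < 1)
    (h : ∀ f : C(Cube n, ℝ), ∃ χ : Fin (2 * n + 1) → ℝ →ᵇ ℝ, (∀ q, ‖χ q‖ ≤ 2 * ‖f‖) ∧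
      ‖f - T φ χ‖ ≤ r * ‖f‖) (f : C(Cube n, ℝ)) :
    ∃ χ, T φ χ = f := by
  choose Φ hΦ hΦr using h
  let F : ℕ → C(Cube n, ℝ) := fun k => (fun g => g - T φ (Φ g))^[k] f
  have hF : ∀ k, F (k + 1) = F k - T φ (Φ (F k)) := fun k => Function.iterate_succ_apply' _ _ _
  have hn : ∀ k, ‖F k‖ ≤ r ^ k * ‖f‖ := by
    intro k
    induction k with
    | zero => simp [F]
    | succ k ih =>
      rw [hF, pow_succ']
      refine (hΦr _).trans ?_
      rw [mul_assoc]
      gcongr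
  have hg : Summable fun k => 2 * (r ^ k * ‖f‖) :=
    ((summable_geometric_of_lt_one hr0 hr).mul_right _).mul_left _
  have hs : ∀ q, Summable fun k => Φ (F k) q := fun q =>
    Summable.of_norm_bounded hg fun k => (hΦ _ q).trans (by have := hn k; linarith)
  refine ⟨fun q => ∑' k, Φ (F k) q, ?_⟩
  ext x
  rw [T_apply]
  have hx : HasSum (fun k => ∑ q, Φ (F k) q (∑ p, φ p q (x p)))
      (∑ q, (∑' k, Φ (F k) q) (∑ p, φ p q (x p))) := by
    refine hasSum_sum fun q _ => ?_
    exact (hs q).hasSum.mapL (BoundedContinuousFunction.evalCLM ℝ (∑ p, φ p q (x p)))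
  have ht := hx.tendsto_sum_nat
  have e : ∀ K, ∑ k ∈ Finset.range K, ∑ q, Φ (F k) q (∑ p, φ p q (x p)) = f x - F K x := by
    intro K
    induction K with
    | zero => simp [F]
    | succ K ih =>
      rw [Finset.sum_range_succ, ih, hF, ContinuousMap.sub_apply, T_apply]; ring
  simp only [e] at ht
  have h0 : Filter.Tendsto (fun K => F K x) Filter.atTop (nhds 0) := by
    refine squeeze_zero_norm (fun K => ((F K).norm_coe_le_norm x).trans (hn K)) ?_
    have := (tendsto_pow_atTop_nhds_zero_of_lt_one hr0 hr).mul_const ‖f‖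
    simpa using this
  have h1 := (tendsto_const_nhds (x := f x)).sub h0
  rw [sub_zero] at h1
  exact tendsto_nhds_unique ht h1

/-- Kolmogorov superposition with monotone inner functions -/
lemma kolmogorov (n : ℕ) : ∃ φ ∈ MonoSet n, ∀ f : C(Cube n, ℝ), ∃ χ, T φ χ = f := by
  obtain ⟨φ, hφ, h⟩ := exists_universal n
  have h1 := theta_lt n
  have h2 := theta_pos n
  refine ⟨φ, hφ, fun f => T_surj φ ((1 + θ n) / 2) (by linarith) (by linarith) (fun f => ?_) f⟩
  by_cases hf : f = 0
  · subst hf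
    refine ⟨0, fun q => by simp, ?_⟩
    have : T φ 0 = 0 := by ext x; simp [T_apply]
    simp [this]
  · rcases h f hf with ⟨χ, a, b⟩ | h
    · refine ⟨χ, fun q => (a q).trans (by linarith [norm_nonneg f]), b.le.trans ?_⟩
      gcongr; linarith
    · exact h

end KSL

/-- Fridman's strengthening of the Kolmogorov Superposition Theorem: the universal
inner functions `ψ^{pq} : [0,1] → [0,1]` can be chosen Lipschitz continuous with
Lipschitz constant 1. -/
theorem kolmogorov_superposition_lipschitz_inner (n : ℕ) (hn : 2 ≤ n) :
    ∃ ψ : Fin n → Fin (2 * n + 1) → ℝ → ℝ,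
      (∀ p q, (∀ x ∈ Set.Icc (0 : ℝ) 1, ∀ y ∈ Set.Icc (0 : ℝ) 1,
          |ψ p q x - ψ p q y| ≤ |x - y|) ∧
        Set.MapsTo (ψ p q) (Set.Icc 0 1) (Set.Icc 0 1)) ∧
      ∀ f : (Fin n → ℝ) → ℝ, ContinuousOn f (Set.Icc 0 1) →
        ∃ χ : Fin (2 * n + 1) → ℝ → ℝ,
          (∀ q, Continuous (χ q)) ∧
          (∀ x ∈ Set.Icc (0 : Fin n → ℝ) 1,
            f x = ∑ q : Fin (2 * n + 1), χ q (∑ p : Fin n, ψ p q (x p))) := by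
  classical
  obtain ⟨φ, hφ, hK⟩ := KSL.kolmogorov n
  -- the reparametrisation
  let g : unitInterval → ℝ := fun x => (x : ℝ) + ∑ p, ∑ q, φ p q x
  have hgc : Continuous g := by fun_prop
  have hsm : Monotone fun x : unitInterval => ∑ p, ∑ q, φ p q x := fun x y h =>
    Finset.sum_le_sum fun p _ => Finset.sum_le_sum fun q _ => hφ p q h
  have hgm : Monotone g := fun x y h => add_le_add h (hsm h)
  have hdiff : ∀ p q (x y : unitInterval), x ≤ y → φ p q y - φ p q x ≤ g y - g x := by
    intro p q x y h
    have h1 : φ p q y - φ p q x ≤ ∑ p, ∑ q, (φ p q y - φ p q x) := by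
      refine le_trans ?_ (Finset.single_le_sum (f := fun p => ∑ q, (φ p q y - φ p q x))
        (fun p _ => Finset.sum_nonneg fun q _ => sub_nonneg.2 (hφ p q h)) (Finset.mem_univ p))
      exact Finset.single_le_sum (f := fun q => φ p q y - φ p q x)
        (fun q _ => sub_nonneg.2 (hφ p q h)) (Finset.mem_univ q)
    simp only [Finset.sum_sub_distrib] at h1
    have h2 : (x : ℝ) ≤ y := h
    simp only [g]
    linarith
  set L : ℝ := g 1 - g 0 with hLdef
  have hL : 0 < L := by
    have h1 := hsm (zero_le_one : (0 : unitInterval) ≤ 1)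
    simp only at h1
    simp only [hLdef, g, Set.Icc.coe_one, Set.Icc.coe_zero]
    linarith
  have hG : ∀ x : unitInterval, (g x - g 0) / L ∈ Set.Icc (0 : ℝ) 1 := by
    intro x
    have h1 : g 0 ≤ g x := hgm unitInterval.nonneg'
    have h2 : g x ≤ g 1 := hgm unitInterval.le_one'
    exact ⟨div_nonneg (by linarith) hL.le, (div_le_one hL).2 (by linarith)⟩
  have hsurj : ∀ t : ℝ, ∃ x : unitInterval, t ∈ Set.Icc (0 : ℝ) 1 → g x = g 0 + L * t := by
    intro t
    by_cases ht : t ∈ Set.Icc (0 : ℝ) 1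
    · have hmem : g 0 + L * t ∈ Set.Icc (g 0) (g 1) := by
        have h1 : 0 ≤ L * t := mul_nonneg hL.le ht.1
        have h2 : L * t ≤ L := mul_le_of_le_one_right hL.le ht.2
        constructor <;> linarith
      obtain ⟨x, hx⟩ := mem_range_of_exists_le_of_exists_ge hgc ⟨0, hmem.1⟩ ⟨1, hmem.2⟩
      exact ⟨x, fun _ => hx⟩
    · exact ⟨0, fun h => absurd h ht⟩
  choose h hh using hsurj
  have hlip : ∀ p q (x y : unitInterval), |φ p q x - φ p q y| ≤ |g x - g y| := by
    intro p q x y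
    rcases le_total x y with hxy | hxy
    · rw [abs_sub_comm, abs_sub_comm (g x), abs_of_nonneg (sub_nonneg.2 (hφ p q hxy))]
      exact (hdiff p q x y hxy).trans (le_abs_self _)
    · rw [abs_of_nonneg (sub_nonneg.2 (hφ p q hxy))]
      exact (hdiff p q y x hxy).trans (le_abs_self _)
  refine ⟨fun p q t => (φ p q (h t) - φ p q 0) / L, fun p q => ⟨fun x hx y hy => ?_, fun x hx => ?_⟩, ?_⟩
  · simp only
    have e : (φ p q (h x) - φ p q 0) / L - (φ p q (h y) - φ p q 0) / L =
        (φ p q (h x) - φ p q (h y)) / L := by ring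
    rw [e, abs_div, abs_of_pos hL, div_le_iff₀ hL]
    refine (hlip p q _ _).trans (le_of_eq ?_)
    rw [hh x hx, hh y hy]
    have e2 : g 0 + L * x - (g 0 + L * y) = (x - y) * L := by ring
    rw [e2, abs_mul, abs_of_pos hL]
  · have h1 : φ p q 0 ≤ φ p q (h x) := hφ p q unitInterval.nonneg'
    have h2 : φ p q (h x) - φ p q 0 ≤ g (h x) - g 0 := hdiff p q _ _ unitInterval.nonneg'
    have h3 : g (h x) ≤ g 1 := hgm unitInterval.le_one'
    exact ⟨div_nonneg (by linarith) hL.le, (div_le_one hL).2 (by linarith)⟩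
  · intro f hf
    have hc : Continuous fun x : KSL.Cube n => f (fun p => (g (x p) - g 0) / L) := by
      refine hf.comp_continuous ?_ fun x => ⟨fun p => (hG (x p)).1, fun p => (hG (x p)).2⟩
      exact continuous_pi fun p =>
        ((hgc.comp (continuous_apply p)).sub continuous_const).div_const _
    obtain ⟨χ, hχ⟩ := hK ⟨_, hc⟩
    refine ⟨fun q s => χ q (L * s + ∑ p, φ p q 0), fun q => ?_, fun x hx => ?_⟩
    · exact (χ q).continuous.comp (by fun_prop)
    · have h1 := congrArg (fun F => F (fun p => h (x p))) hχ
      simp only [KSL.T_apply, ContinuousMap.coe_mk] at h1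
      have h2 : (fun p => (g (h (x p)) - g 0) / L) = x := by
        funext p
        rw [hh (x p) ⟨hx.1 p, hx.2 p⟩]
        field_simp
        ring
      rw [h2] at h1
      rw [← h1]
      refine Finset.sum_congr rfl fun q _ => ?_
      congr 1
      rw [Finset.mul_sum, ← Finset.sum_add_distrib]
      refine Finset.sum_congr rfl fun p _ => ?_
      field_simp
      ring
end

section
/- Let n ≥ 2, fix ε with 0 < ε ≤ 1/(2n). Then there exist a real number λ > 0 such that 1 = λ^0, λ^1, …, λ^{n−1} are linearly independent over the rationals, and a continuous function ψ : [−1, 1+2nε] → [0,1], such that for every continuous function f : [0,1]^n → ℝ there exist continuous functions χ^q : ℝ → ℝ (for q ∈ {0,…,2n}) satisfying f(x_1,…,x_n) = Σ_{q=0}^{2n} χ^q( Σ_{p=1}^n λ^{p−1} ψ(x_p + qε) ) for all (x_1,…,x_n) ∈ [0,1]^n. -/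
abbrev SI (n : ℕ) : Set (Fin n → ℝ) := Set.Icc 0 1
abbrev SK (n : ℕ) (ε : ℝ) : Set ℝ := Set.Icc (-1) (1 + 2 * n * ε)

/-- A positive real with rationally independent powers. -/
lemma exists_lambda (n : ℕ) : ∃ l : ℝ, 0 < l ∧
    (∀ c : Fin n → ℚ, ∑ p : Fin n, (c p : ℝ) * l ^ (p : ℕ) = 0 → c = 0) := by
  have key : ∃ l : ℝ, 0 < l ∧ Transcendental ℚ l := by
    have h : Transcendental ℤ (liouvilleNumber (2:ℕ)) := transcendental_liouvilleNumber (le_refl 2)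
    have hQ : Transcendental ℚ (liouvilleNumber (2:ℕ)) := by
      intro hh
      exact h ((IsFractionRing.isAlgebraic_iff ℤ ℚ ℝ).mpr hh)
    rcases lt_trichotomy (liouvilleNumber (2:ℕ)) 0 with h0 | h0 | h0
    · refine ⟨-liouvilleNumber (2:ℕ), by linarith, ?_⟩
      intro hh
      exact hQ (by simpa using hh.neg)
    · exact absurd (h0 ▸ isAlgebraic_zero) hQ
    · exact ⟨_, h0, hQ⟩
  obtain ⟨l, hl, ht⟩ := key
  refine ⟨l, hl, fun c hc => ?_⟩
  have hp := (transcendental_iff.mp ht) (∑ p : Fin n, Polynomial.monomial (p : ℕ) (c p)) (by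
    simpa [Polynomial.aeval_monomial] using hc)
  funext i
  have := congrArg (fun P => Polynomial.coeff P (i : ℕ)) hp
  simpa [Polynomial.finsetSum_coeff, Polynomial.coeff_monomial, Fin.val_inj] using this

/-- Existence of injective rational approximations. -/
lemma exists_inj_rat (φ : ℤ → ℝ) (r : ℝ) (hr : 0 < r) :
    ∃ v : ℤ → ℚ, Function.Injective v ∧ ∀ k, |(v k : ℝ) - φ k| ≤ r := by
  obtain ⟨M, hM⟩ := exists_nat_one_div_lt hr
  have hM0 : (0:ℝ) < (M:ℝ) + 1 := by positivity
  refine ⟨fun k => ((⌊((M:ℝ)+1) * φ k⌋ : ℚ) + 1 / ((Encodable.encode k : ℚ) + 2)) / ((M:ℚ)+1), ?_, ?_⟩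
  · intro j k hjk
    have h1 : (0:ℚ) < (M:ℚ) + 1 := by positivity
    simp only at hjk
    rw [div_left_inj' h1.ne'] at hjk
    have hf : ∀ (m : ℤ) (e : ℕ), Int.fract ((m:ℚ) + 1 / ((e:ℚ) + 2)) = 1 / ((e:ℚ)+2) := by
      intro m e
      rw [Int.fract_intCast_add, Int.fract_eq_self]
      refine ⟨by positivity, ?_⟩
      rw [div_lt_one (by positivity)]
      have : (0:ℚ) ≤ e := by positivity
      linarith
    have h2 := congrArg Int.fract hjk
    rw [hf, hf] at h2
    rw [one_div, one_div, inv_inj] at h2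
    have h4 : (Encodable.encode j : ℚ) = Encodable.encode k := by linarith
    exact Encodable.encode_injective (by exact_mod_cast h4)
  · intro k
    push_cast
    set y := ((M:ℝ)+1) * φ k with hy
    have hφ : φ k = y / ((M:ℝ)+1) := by rw [hy]; field_simp
    rw [hφ, ← sub_div, abs_div, abs_of_pos hM0]
    refine le_trans ?_ hM.le
    gcongr
    have e0 : (0:ℝ) ≤ Encodable.encode k := by positivity
    have e1 : 1 / ((Encodable.encode k : ℝ) + 2) ≤ 1 := by
      rw [div_le_one (by positivity)]; linarith
    have e2 : 0 ≤ 1 / ((Encodable.encode k : ℝ) + 2) := by positivity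
    have := Int.floor_le y
    have := Int.lt_floor_add_one y
    rw [abs_le]; constructor <;> linarith

/-- Continuous staircase. -/
lemma exists_stair (β : ℝ) (hβ : 0 < β) (hβ1 : β ≤ 1) : ∃ w : ℝ → ℝ, Continuous w ∧
    (∀ u, |w u - u| ≤ 1) ∧ ∀ u, Int.fract u ≤ 1 - β → w u = ⌊u⌋ := by
  refine ⟨fun u => u + (max 0 ((Int.fract u - (1 - β)) / β) - Int.fract u), ?_, ?_, ?_⟩
  · refine continuous_id.add ?_
    have : ContinuousOn (fun θ : ℝ => max 0 ((θ - (1 - β)) / β) - θ) (Set.Icc 0 1) := by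
      apply Continuous.continuousOn; fun_prop
    refine ContinuousOn.comp_fract'' this ?_
    have h1 : (0 - (1 - β)) / β ≤ 0 := div_nonpos_of_nonpos_of_nonneg (by linarith) hβ.le
    have h2 : (1 - (1 - β)) / β = 1 := by field_simp; ring
    rw [max_eq_left h1, h2]; norm_num
  · intro u
    have h0 := Int.fract_nonneg u
    have h1 := (Int.fract_lt_one u).le
    have h2 : max 0 ((Int.fract u - (1 - β)) / β) ≤ 1 := by
      apply max_le zero_le_one
      rw [div_le_one hβ]; linarith
    have h3 := le_max_left 0 ((Int.fract u - (1 - β)) / β)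
    rw [abs_le]; constructor <;> linarith
  · intro u hu
    have h1 : (Int.fract u - (1 - β)) / β ≤ 0 := div_nonpos_of_nonpos_of_nonneg (by linarith) hβ.le
    simp only
    rw [max_eq_left h1]
    have := Int.floor_add_fract u
    linarith

/-- At most one shift is bad. -/
lemma bad_card (m N : ℕ) (u : ℝ) :
    (Finset.univ.filter (fun q : Fin (m+1) =>
      1 - 1 / ((m:ℝ)+1) < Int.fract (u + (q:ℕ) * (N + 1 / ((m:ℝ)+1))))).card ≤ 1 := by
  rw [Finset.card_le_one]
  intro a ha b hb
  simp only [Finset.mem_filter, Finset.mem_univ, true_and] at ha hb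
  have hm : (0:ℝ) < (m:ℝ) + 1 := by positivity
  set β := 1 / ((m:ℝ)+1) with hβ
  have hβm : ((m:ℝ)+1) * β = 1 := by rw [hβ]; field_simp
  have hβ0 : 0 < β := by positivity
  have ha1 := Int.fract_lt_one (u + (a:ℕ) * (N + β))
  have hb1 := Int.fract_lt_one (u + (b:ℕ) * (N + β))
  have ha2 := Int.floor_add_fract (u + (a:ℕ) * (N + β))
  have hb2 := Int.floor_add_fract (u + (b:ℕ) * (N + β))
  set A := ⌊u + (a:ℕ) * (N + β)⌋
  set B := ⌊u + (b:ℕ) * (N + β)⌋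
  set z : ℤ := ((a:ℕ):ℤ) - ((b:ℕ):ℤ) with hz
  set J : ℤ := z + (m+1) * (z * N - A + B) with hJ
  have hJr : ((J:ℤ):ℝ) * β = Int.fract (u + (a:ℕ) * (N + β)) - Int.fract (u + (b:ℕ) * (N + β)) := by
    rw [hJ, hz]; push_cast
    linear_combination ((((a:ℕ):ℝ) - (b:ℕ)) * N - A + B) * hβm + hb2 - ha2
  have hJ1 : J < 1 := by
    have : ((J:ℤ):ℝ) * β < 1 * β := by linarith
    exact_mod_cast lt_of_mul_lt_mul_right this hβ0.le
  have hJ2 : -1 < J := by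
    have : (-1) * β < ((J:ℤ):ℝ) * β := by linarith
    exact_mod_cast lt_of_mul_lt_mul_right this hβ0.le
  have hJ0 : J = 0 := by omega
  have hd : ((m:ℤ)+1) ∣ z := ⟨-(z * N - A + B), by linarith⟩
  have hal := a.2
  have hbl := b.2
  have hz0 : z = 0 := by
    apply Int.eq_zero_of_abs_lt_dvd hd
    rw [abs_lt]; constructor <;> omega
  apply Fin.ext; omega

open BoundedContinuousFunction in
/-- Outer functions taking prescribed values on a finite set of distinct points. -/
lemma exists_outer (n : ℕ) (σ : (Fin n → ℤ) → ℝ) (hσ : Function.Injective σ)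
    (a : (Fin n → ℤ) → ℝ) (C : ℝ) (hC : 0 ≤ C) (ha : ∀ k, |a k| ≤ C) (B : ℤ) :
    ∃ g : ℝ →ᵇ ℝ, ‖g‖ ≤ C ∧ ∀ k, (∀ p, k p ∈ Finset.Icc 0 B) → g (σ k) = a k := by
  let X := ↥(Fintype.piFinset (fun _ : Fin n => Finset.Icc (0:ℤ) B))
  let e : X → ℝ := fun k => σ k.1
  have he : Topology.IsClosedEmbedding e :=
    Continuous.isClosedEmbedding continuous_of_discreteTopology
      (fun x y h => Subtype.ext (hσ h))
  let F : X →ᵇ ℝ := BoundedContinuousFunction.ofNormedAddCommGroup (fun k : X => a k.1)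
    continuous_of_discreteTopology C (fun k => ha _)
  have hF : ‖F‖ ≤ C := BoundedContinuousFunction.norm_ofNormedAddCommGroup_le _ hC _
  obtain ⟨g, hg, hge⟩ := exists_extension_norm_eq_of_isClosedEmbedding F he
  refine ⟨g, hg ▸ hF, fun k hk => ?_⟩
  exact congrFun hge (⟨k, Fintype.mem_piFinset.mpr hk⟩ : X)

/-- The shift map. -/
def shiftMap (n : ℕ) (ε : ℝ) (hε : 0 < ε) (q : Fin (2 * n + 1)) (p : Fin n) :
    C(SI n, SK n ε) where
  toFun x := ⟨x.1 p + ((q : ℕ) : ℝ) * ε, by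
    have h0 : 0 ≤ x.1 p := x.2.1 p
    have h1 : x.1 p ≤ 1 := x.2.2 p
    have h2 : ((q:ℕ):ℝ) ≤ 2 * n := by
      have := q.2
      have h : (q:ℕ) ≤ 2 * n := by omega
      exact_mod_cast h
    have h3 : 0 ≤ ((q:ℕ):ℝ) * ε := by positivity
    have h4 : ((q:ℕ):ℝ) * ε ≤ 2 * n * ε := by gcongr
    constructor <;> linarith⟩
  continuous_toFun := by
    refine Continuous.subtype_mk ?_ _
    exact (((continuous_apply p).comp continuous_subtype_val)).add continuous_const

/-- The inner sums. -/
noncomputable def Phi (n : ℕ) (ε : ℝ) (hε : 0 < ε) (l : ℝ) (ψ : C(SK n ε, ℝ))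
    (q : Fin (2 * n + 1)) : C(SI n, ℝ) :=
  ∑ p : Fin n, l ^ (p : ℕ) • ψ.comp (shiftMap n ε hε q p)

lemma Phi_apply (n : ℕ) (ε : ℝ) (hε : 0 < ε) (l : ℝ) (ψ : C(SK n ε, ℝ))
    (q : Fin (2 * n + 1)) (x : SI n) :
    Phi n ε hε l ψ q x = ∑ p : Fin n, l ^ (p : ℕ) * ψ (shiftMap n ε hε q p x) := by
  simp [Phi, ContinuousMap.sum_apply]

lemma Phi_continuous (n : ℕ) (ε : ℝ) (hε : 0 < ε) (l : ℝ) (q : Fin (2 * n + 1)) :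
    Continuous (fun ψ => Phi n ε hε l ψ q) := by
  unfold Phi
  refine continuous_finsetSum _ fun p _ => ?_
  have h : Continuous (fun ψ : C(SK n ε, ℝ) => ψ.comp (shiftMap n ε hε q p)) :=
    ContinuousMap.continuous_precomp _
  exact h.const_smul (l ^ (p : ℕ))

open BoundedContinuousFunction in
/-- The superposition operator. -/
noncomputable def Lop (n : ℕ) (ε : ℝ) (hε : 0 < ε) (l : ℝ) (ψ : C(SK n ε, ℝ))
    (g : Fin (2 * n + 1) → (ℝ →ᵇ ℝ)) : C(SI n, ℝ) :=
  ∑ q, (g q).toContinuousMap.comp (Phi n ε hε l ψ q)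

open BoundedContinuousFunction in
lemma Lop_apply (n : ℕ) (ε : ℝ) (hε : 0 < ε) (l : ℝ) (ψ : C(SK n ε, ℝ))
    (g : Fin (2 * n + 1) → (ℝ →ᵇ ℝ)) (x : SI n) :
    Lop n ε hε l ψ g x = ∑ q, g q (Phi n ε hε l ψ q x) := by
  simp [Lop, ContinuousMap.sum_apply]

open BoundedContinuousFunction in
lemma Lop_continuous (n : ℕ) (ε : ℝ) (hε : 0 < ε) (l : ℝ)
    (g : Fin (2 * n + 1) → (ℝ →ᵇ ℝ)) :
    Continuous (fun ψ => Lop n ε hε l ψ g) := by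
  unfold Lop
  refine continuous_finsetSum _ fun q _ => ?_
  exact (ContinuousMap.continuous_postcomp _).comp (Phi_continuous n ε hε l q)

open BoundedContinuousFunction in
/-- The good set of inner functions for `f`. -/
def goodSet (n : ℕ) (ε : ℝ) (hε : 0 < ε) (l : ℝ) (f : C(SI n, ℝ)) : Set C(SK n ε, ℝ) :=
  {ψ | ∃ g : Fin (2 * n + 1) → (ℝ →ᵇ ℝ), ‖g‖ ≤ ‖f‖ ∧
    ‖f - Lop n ε hε l ψ g‖ < (1 - 1 / (2 * (2 * (n:ℝ) + 1))) * ‖f‖}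

lemma goodSet_open (n : ℕ) (ε : ℝ) (hε : 0 < ε) (l : ℝ) (f : C(SI n, ℝ)) :
    IsOpen (goodSet n ε hε l f) := by
  rw [isOpen_iff_mem_nhds]
  rintro ψ ⟨g, hg, h⟩
  have hc : Continuous (fun ψ => ‖f - Lop n ε hε l ψ g‖) :=
    (continuous_const.sub (Lop_continuous n ε hε l g)).norm
  filter_upwards [(isOpen_Iio.preimage hc).mem_nhds h] with ψ₁ hh
  exact ⟨g, hg, hh⟩

lemma sigma_inj (n : ℕ) (l : ℝ)
    (hl : ∀ c : Fin n → ℚ, ∑ p : Fin n, (c p : ℝ) * l ^ (p : ℕ) = 0 → c = 0)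
    (v : ℤ → ℚ) (hv : Function.Injective v) :
    Function.Injective (fun k : Fin n → ℤ => ∑ p : Fin n, l ^ (p:ℕ) * (v (k p) : ℝ)) := by
  intro j k h
  have h1 := hl (fun p => v (j p) - v (k p)) (by
    simp only at h
    rw [← sub_eq_zero, ← Finset.sum_sub_distrib] at h
    rw [← h]
    refine Finset.sum_congr rfl fun p _ => ?_
    push_cast; ring)
  funext p
  have := congrFun h1 p
  exact hv (sub_eq_zero.mp this)

open BoundedContinuousFunction in
lemma goodSet_dense (n : ℕ) (ε : ℝ) (hε : 0 < ε) (l : ℝ)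
    (hl : ∀ c : Fin n → ℚ, ∑ p : Fin n, (c p : ℝ) * l ^ (p : ℕ) = 0 → c = 0)
    (f : C(SI n, ℝ)) (hf : f ≠ 0) : Dense (goodSet n ε hε l f) := by
  rw [Metric.dense_iff]
  intro ψ₀ r hr
  have hf0 : 0 < ‖f‖ := norm_pos_iff.mpr hf
  have hK : (-1:ℝ) ≤ 1 + 2 * n * ε := by
    have : 0 ≤ 2 * n * ε := by positivity
    linarith
  -- constants
  set c : ℝ := 1 / (((2 * n : ℕ) : ℝ) + 1) with hc
  have hc0 : 0 < c := by positivity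
  have hcn : (2 * (n:ℝ) + 1) * c = 1 := by rw [hc]; push_cast; field_simp
  have hc1 : c ≤ 1 := by
    have : 0 ≤ 2 * (n:ℝ) * c := by positivity
    linarith
  set η : ℝ := c * ‖f‖ / 4 with hη
  have hη0 : 0 < η := by positivity
  -- the extension of ψ₀
  let P : ℝ → ℝ := fun t => ψ₀ (Set.projIcc (-1) (1 + 2 * n * ε) hK t)
  have hPu : UniformContinuous P :=
    (CompactSpace.uniformContinuous_of_continuous ψ₀.continuous).comp
      (LipschitzWith.projIcc hK).uniformContinuous
  obtain ⟨d₁, hd₁, hP⟩ := Metric.uniformContinuous_iff.mp hPu (r / 4) (by positivity)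
  obtain ⟨d₂, hd₂, hfu⟩ := Metric.uniformContinuous_iff.mp
    (CompactSpace.uniformContinuous_of_continuous f.continuous) η hη0
  -- choice of δ
  obtain ⟨N, hN⟩ := exists_nat_gt (ε / min d₁ d₂)
  have hd : 0 < min d₁ d₂ := lt_min hd₁ hd₂
  set δ : ℝ := ε / (N + c) with hδ
  have hNc : 0 < (N:ℝ) + c := by positivity
  have hδ0 : 0 < δ := by positivity
  have hδε : ε / δ = N + c := by rw [hδ]; field_simp
  have hδd : δ < min d₁ d₂ := by
    rw [hδ, div_lt_iff₀ hNc]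
    rw [div_lt_iff₀ hd] at hN
    nlinarith
  have hδ1 : δ < d₁ := hδd.trans_le (min_le_left _ _)
  have hδ2 : δ < d₂ := hδd.trans_le (min_le_right _ _)
  obtain ⟨w, hwc, hw1, hw⟩ := exists_stair c hc0 hc1
  obtain ⟨v, hvi, hv⟩ := exists_inj_rat (fun k => P (δ * k)) (r / 4) (by positivity)
  -- correction
  let D : ℤ →ᵇ ℝ := BoundedContinuousFunction.ofNormedAddCommGroup
    (fun k : ℤ => (v k : ℝ) - P (δ * k)) continuous_of_discreteTopology (r / 4) hv
  have hD : ‖D‖ ≤ r / 4 :=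
    BoundedContinuousFunction.norm_ofNormedAddCommGroup_le _ (by positivity) _
  obtain ⟨G, hG, hGe⟩ :=
    exists_extension_norm_eq_of_isClosedEmbedding D Int.isClosedEmbedding_coe_real
  have hGk : ∀ k : ℤ, G (k:ℝ) = (v k : ℝ) - P (δ * k) := fun k => congrFun hGe k
  have hGn : ‖G‖ ≤ r / 4 := hG ▸ hD
  let ψ : C(SK n ε, ℝ) := ⟨fun t => P (δ * w (t.1 / δ)) + G (w (t.1 / δ)), by
    have h1 : Continuous fun t : SK n ε => w (t.1 / δ) :=
      hwc.comp (continuous_subtype_val.div_const δ)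
    exact (hPu.continuous.comp (continuous_const.mul h1)).add (G.continuous.comp h1)⟩
  have hψ : ∀ t : SK n ε, ψ t = P (δ * w (t.1 / δ)) + G (w (t.1 / δ)) := fun t => rfl
  refine ⟨ψ, ?_, ?_⟩
  · rw [Metric.mem_ball, dist_eq_norm]
    refine lt_of_le_of_lt ((ContinuousMap.norm_le _ (by positivity : (0:ℝ) ≤ r / 2)).mpr ?_)
      (by linarith)
    intro t
    rw [ContinuousMap.sub_apply, hψ]
    have h0 : ψ₀ t = P t.1 := by simp only [P]; rw [Set.projIcc_val]
    rw [h0]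
    have h1 : dist (δ * w (t.1 / δ)) t.1 < d₁ := by
      rw [Real.dist_eq]
      have : δ * w (t.1 / δ) - t.1 = δ * (w (t.1 / δ) - t.1 / δ) := by field_simp
      rw [this, abs_mul, abs_of_pos hδ0]
      have := hw1 (t.1 / δ)
      nlinarith
    have h2 := hP h1
    rw [Real.dist_eq] at h2
    have h3 : |G (w (t.1 / δ))| ≤ r / 4 := (G.norm_coe_le_norm _).trans hGn
    rw [Real.norm_eq_abs]
    calc _ = |(P (δ * w (t.1 / δ)) - P t.1) + G (w (t.1 / δ))| := by congr 1; ring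
      _ ≤ _ := abs_add_le _ _
      _ ≤ _ := by linarith
  · -- plateau values
    have hplat : ∀ t : SK n ε, Int.fract (t.1 / δ) ≤ 1 - c → ψ t = v ⌊t.1 / δ⌋ := by
      intro t ht
      rw [hψ, hw _ ht, hGk]; ring
    set σ : (Fin n → ℤ) → ℝ := fun k => ∑ p : Fin n, l ^ (p:ℕ) * (v (k p) : ℝ) with hσ
    have hσi : Function.Injective σ := sigma_inj n l hl v hvi
    -- multi-index of a point
    let idx : Fin (2 * n + 1) → SI n → Fin n → ℤ :=
      fun q x p => ⌊(shiftMap n ε hε q p x).1 / δ⌋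
    have hidx : ∀ q x p, idx q x p ∈ Finset.Icc 0 ⌊(1 + 2 * n * ε) / δ⌋ := by
      intro q x p
      rw [Finset.mem_Icc]
      constructor
      · apply Int.floor_nonneg.mpr
        apply div_nonneg _ hδ0.le
        have h0 : 0 ≤ x.1 p := x.2.1 p
        have : 0 ≤ x.1 p + ((q:ℕ):ℝ) * ε := by positivity
        exact this
      · apply Int.floor_mono
        have := (shiftMap n ε hε q p x).2.2
        gcongr
    have hval : ∀ q : Fin (2 * n + 1), ∃ a : (Fin n → ℤ) → ℝ, (∀ k, |a k| ≤ c * ‖f‖) ∧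
        ∀ x, |c * f x - a (idx q x)| ≤ c * η := by
      intro q
      classical
      refine ⟨fun k => if h : ∃ y, idx q y = k then c * f h.choose else 0, ?_, ?_⟩
      · intro k
        by_cases h : ∃ y, idx q y = k
        · simp only [h, dif_pos]
          rw [abs_mul, abs_of_pos hc0]
          gcongr
          exact f.norm_coe_le_norm _
        · simp only [h, dif_neg, not_false_eq_true, abs_zero]
          positivity
      · intro x
        have h : ∃ y, idx q y = idx q x := ⟨x, rfl⟩
        simp only [h, dif_pos]
        have hy := h.choose_spec
        set y := h.choose
        rw [← mul_sub, abs_mul, abs_of_pos hc0]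
        gcongr
        have hxy : dist x y < d₂ := by
          rw [Subtype.dist_eq, dist_pi_lt_iff hd₂]
          intro p
          refine lt_trans ?_ hδ2
          have h1 : ⌊(x.1 p + ((q:ℕ):ℝ) * ε) / δ⌋ = ⌊(y.1 p + ((q:ℕ):ℝ) * ε) / δ⌋ :=
            (congrFun hy p).symm
          have h2 := Int.abs_sub_lt_one_of_floor_eq_floor h1
          rw [Real.dist_eq]
          rw [← sub_div, abs_div, abs_of_pos hδ0, div_lt_one hδ0] at h2
          have h3 : x.1 p - y.1 p = x.1 p + ((q:ℕ):ℝ) * ε - (y.1 p + ((q:ℕ):ℝ) * ε) := by ring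
          rw [h3]
          exact h2
        have := hfu hxy
        rw [Real.dist_eq] at this
        exact this.le
    choose a ha1 ha2 using hval
    have hg : ∀ q, ∃ g : ℝ →ᵇ ℝ, ‖g‖ ≤ c * ‖f‖ ∧
        ∀ k, (∀ p, k p ∈ Finset.Icc 0 ⌊(1 + 2 * n * ε) / δ⌋) → g (σ k) = a q k :=
      fun q => exists_outer n σ hσi (a q) (c * ‖f‖) (by positivity) (ha1 q) _
    choose g hg1 hg2 using hg
    refine ⟨g, ?_, ?_⟩
    · rw [pi_norm_le_iff_of_nonneg (norm_nonneg _)]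
      intro q
      refine (hg1 q).trans ?_
      nlinarith
    · have hρ : (1 - 1 / (2 * (2 * (n:ℝ) + 1))) = 1 - c / 2 := by
        rw [hc]; push_cast; field_simp
      rw [hρ]
      refine lt_of_le_of_lt ((ContinuousMap.norm_le _ ?_).mpr ?_)
        (by nlinarith [mul_pos hc0 hf0] : η + n * (2 * (c * ‖f‖)) < (1 - c / 2) * ‖f‖)
      · positivity
      intro x
      rw [ContinuousMap.sub_apply, Lop_apply, Real.norm_eq_abs]
      let bad : Fin n → Finset (Fin (2 * n + 1)) := fun p => Finset.univ.filter (fun q =>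
        1 - 1 / (((2 * n : ℕ):ℝ)+1) <
          Int.fract (x.1 p / δ + (q:ℕ) * (N + 1 / (((2 * n : ℕ):ℝ)+1))))
      let Bad := Finset.univ.biUnion bad
      have hBad : Bad.card ≤ n := by
        calc Bad.card ≤ ∑ p : Fin n, (bad p).card := Finset.card_biUnion_le
          _ ≤ ∑ p : Fin n, 1 := Finset.sum_le_sum fun p _ => bad_card (2 * n) N _
          _ = n := by simp
      have hgood : ∀ q, q ∉ Bad → |c * f x - g q (Phi n ε hε l ψ q x)| ≤ c * η := by
        intro q hq
        have hq' : ∀ p, Int.fract ((shiftMap n ε hε q p x).1 / δ) ≤ 1 - c := by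
          intro p
          by_contra hcon
          rw [not_le] at hcon
          apply hq
          refine Finset.mem_biUnion.mpr ⟨p, Finset.mem_univ _, ?_⟩
          refine Finset.mem_filter.mpr ⟨Finset.mem_univ _, ?_⟩
          rw [← hc, ← hδε]
          have h3 : x.1 p / δ + ((q:ℕ):ℝ) * (ε / δ) = (x.1 p + ((q:ℕ):ℝ) * ε) / δ := by ring
          rw [h3]
          exact hcon
        have hPhi : Phi n ε hε l ψ q x = σ (idx q x) := by
          rw [Phi_apply, hσ]
          refine Finset.sum_congr rfl fun p _ => ?_
          rw [hplat _ (hq' p)]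
        rw [hPhi, hg2 q _ (hidx q x)]
        exact ha2 q x
      have hall : ∀ q, |c * f x - g q (Phi n ε hε l ψ q x)| ≤
          c * η + if q ∈ Bad then 2 * (c * ‖f‖) else 0 := by
        intro q
        by_cases hq : q ∈ Bad
        · rw [if_pos hq]
          have h1 : |c * f x| ≤ c * ‖f‖ := by
            rw [abs_mul, abs_of_pos hc0]; gcongr; exact f.norm_coe_le_norm _
          have h2 : |g q (Phi n ε hε l ψ q x)| ≤ c * ‖f‖ :=
            ((g q).norm_coe_le_norm _).trans (hg1 q)
          have h3 := abs_sub (c * f x) (g q (Phi n ε hε l ψ q x))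
          have : 0 < c * η := by positivity
          linarith
        · rw [if_neg hq, add_zero]; exact hgood q hq
      have hsum : f x - ∑ q, g q (Phi n ε hε l ψ q x) =
          ∑ q, (c * f x - g q (Phi n ε hε l ψ q x)) := by
        rw [Finset.sum_sub_distrib]
        simp only [Finset.sum_const, Finset.card_univ, Fintype.card_fin, nsmul_eq_mul]
        push_cast
        rw [← mul_assoc, hcn, one_mul]
      rw [hsum]
      calc _ ≤ ∑ q, |c * f x - g q (Phi n ε hε l ψ q x)| := Finset.abs_sum_le_sum_abs _ _
        _ ≤ ∑ q, (c * η + if q ∈ Bad then 2 * (c * ‖f‖) else 0) :=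
          Finset.sum_le_sum fun q _ => hall q
        _ = η + Bad.card * (2 * (c * ‖f‖)) := by
          rw [Finset.sum_add_distrib, ← Finset.sum_filter]
          simp only [Finset.sum_const, Finset.card_univ, Fintype.card_fin, nsmul_eq_mul,
            Finset.filter_univ_mem]
          push_cast
          rw [← mul_assoc, hcn, one_mul]
        _ ≤ _ := by gcongr

open BoundedContinuousFunction in
lemma Lop_sub (n : ℕ) (ε : ℝ) (hε : 0 < ε) (l : ℝ) (ψ : C(SK n ε, ℝ))
    (g h : Fin (2 * n + 1) → (ℝ →ᵇ ℝ)) :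
    Lop n ε hε l ψ (g - h) = Lop n ε hε l ψ g - Lop n ε hε l ψ h := by
  ext x; simp [Lop_apply]

open BoundedContinuousFunction in
/-- Surjectivity from a uniform contraction estimate. -/
lemma surj_of_contraction (n : ℕ) (ε : ℝ) (hε : 0 < ε) (l : ℝ) (ψ : C(SK n ε, ℝ)) (ρ : ℝ)
    (hρ0 : 0 ≤ ρ) (hρ : ρ < 1)
    (H : ∀ f : C(SI n, ℝ), ∃ g : Fin (2 * n + 1) → (ℝ →ᵇ ℝ), ‖g‖ ≤ 2 * ‖f‖ ∧
      ‖f - Lop n ε hε l ψ g‖ ≤ ρ * ‖f‖) (f : C(SI n, ℝ)) :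
    ∃ g : Fin (2 * n + 1) → (ℝ →ᵇ ℝ), f = Lop n ε hε l ψ g := by
  choose T hT1 hT2 using H
  let F : ℕ → C(SI n, ℝ) := fun k => (fun h => h - Lop n ε hε l ψ (T h))^[k] f
  have hFs : ∀ k, F (k+1) = F k - Lop n ε hε l ψ (T (F k)) := by
    intro k; simp only [F, Function.iterate_succ_apply']
  have hFn : ∀ k, ‖F k‖ ≤ ρ ^ k * ‖f‖ := by
    intro k
    induction k with
    | zero => simp [F]
    | succ k ih =>
      rw [hFs]
      refine (hT2 _).trans ?_
      rw [pow_succ']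
      nlinarith
  have hsum : Summable (fun k => T (F k)) := by
    refine Summable.of_norm_bounded
      (g := fun k => ρ ^ k * (2 * ‖f‖)) ((summable_geometric_of_lt_one hρ0 hρ).mul_right _) ?_
    intro k
    refine (hT1 _).trans ?_
    have := hFn k
    linarith
  refine ⟨∑' k, T (F k), ?_⟩
  ext x
  have hev : ∀ q, HasSum (fun k => T (F k) q (Phi n ε hε l ψ q x))
      ((∑' k, T (F k)) q (Phi n ε hε l ψ q x)) := by
    intro q
    have h1 := (Pi.hasSum.mp hsum.hasSum) q
    exact h1.map (BoundedContinuousFunction.evalCLM ℝ (Phi n ε hε l ψ q x)) 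
      (BoundedContinuousFunction.evalCLM ℝ (Phi n ε hε l ψ q x)).continuous
  have h2 : HasSum (fun k => Lop n ε hε l ψ (T (F k)) x) (Lop n ε hε l ψ (∑' k, T (F k)) x) := by
    simp only [Lop_apply]
    exact hasSum_sum fun q _ => hev q
  have hF0 : Filter.Tendsto (fun k => F k x) Filter.atTop (nhds 0) := by
    refine squeeze_zero_norm (a := fun k => ρ ^ k * ‖f‖)
      (fun k => ((F k).norm_coe_le_norm x).trans (hFn k)) ?_
    simpa using (tendsto_pow_atTop_nhds_zero_of_lt_one hρ0 hρ).mul_const ‖f‖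
  have h3 : ∀ m, ∑ k ∈ Finset.range m, Lop n ε hε l ψ (T (F k)) x = f x - F m x := by
    intro m
    induction m with
    | zero => simp [F]
    | succ m ih => rw [Finset.sum_range_succ, ih, hFs, ContinuousMap.sub_apply]; ring
  have h4 := h2.tendsto_sum_nat
  simp only [h3] at h4
  have h5 : Filter.Tendsto (fun m => f x - F m x) Filter.atTop (nhds (f x)) := by
    simpa using tendsto_const_nhds.sub hF0
  exact tendsto_nhds_unique h5 h4

open BoundedContinuousFunction in
lemma exists_psi (n : ℕ) (ε : ℝ) (hε : 0 < ε) (l : ℝ)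
    (hl : ∀ c : Fin n → ℚ, ∑ p : Fin n, (c p : ℝ) * l ^ (p : ℕ) = 0 → c = 0) :
    ∃ ψ : C(SK n ε, ℝ), ∀ f : C(SI n, ℝ),
      ∃ g : Fin (2 * n + 1) → (ℝ →ᵇ ℝ), f = Lop n ε hε l ψ g := by
  let s := TopologicalSpace.denseSeq C(SI n, ℝ)
  have hd : Dense (⋂ k : {k : ℕ // s k ≠ 0}, goodSet n ε hε l (s k)) :=
    dense_iInter_of_isOpen (fun k => goodSet_open n ε hε l _)
      (fun k => goodSet_dense n ε hε l hl _ k.2)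
  obtain ⟨ψ, hψ⟩ := hd.nonempty
  rw [Set.mem_iInter] at hψ
  refine ⟨ψ, ?_⟩
  set c : ℝ := 1 / (2 * (2 * (n:ℝ) + 1)) with hc
  have hc0 : 0 < c := by positivity
  have hc1 : c ≤ 1 := by
    rw [hc, div_le_one (by positivity)]
    have : (0:ℝ) ≤ n := by positivity
    linarith
  refine surj_of_contraction n ε hε l ψ (1 - c / 2) (by linarith) (by linarith) ?_
  intro f
  by_cases hf : f = 0
  · refine ⟨0, by simp, ?_⟩
    have : Lop n ε hε l ψ 0 = 0 := by ext x; simp [Lop_apply]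
    rw [this, hf]; simp
  have hf0 : 0 < ‖f‖ := norm_pos_iff.mpr hf
  obtain ⟨k, hk⟩ := (TopologicalSpace.denseRange_denseSeq C(SI n, ℝ)).exists_dist_lt f
    (by positivity : 0 < c / 4 * ‖f‖)
  change dist f (s k) < _ at hk
  rw [dist_eq_norm] at hk
  have hs : s k ≠ 0 := by
    intro h
    rw [h, sub_zero] at hk
    nlinarith
  obtain ⟨g, hg1, hg2⟩ := hψ ⟨k, hs⟩
  simp only at hg1 hg2
  have hsf : ‖s k‖ ≤ ‖f‖ + c / 4 * ‖f‖ := by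
    have := norm_sub_norm_le (s k) f
    rw [norm_sub_rev] at this
    linarith
  refine ⟨g, ?_, ?_⟩
  · nlinarith
  · have h1 : f - Lop n ε hε l ψ g = (f - s k) + (s k - Lop n ε hε l ψ g) := by abel
    rw [h1]
    refine (norm_add_le _ _).trans ?_
    rw [← hc] at hg2
    have h2 : (1 - c) * ‖s k‖ ≤ (1 - c) * (‖f‖ + c / 4 * ‖f‖) :=
      mul_le_mul_of_nonneg_left hsf (by linarith)
    have h3 : 0 ≤ c * c * ‖f‖ := by positivity
    nlinarith

/-- Sprecher's reformulation of the Kolmogorov Superposition Theorem: there exist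
`λ > 0` with `1 = λ^0, λ^1, …, λ^{n-1}` rationally independent and a single continuous
`ψ : [-1, 1 + 2nε] → [0,1]` such that every continuous `f : [0,1]^n → ℝ` equals
`∑_{q=0}^{2n} χ^q (∑_{p=1}^n λ^{p-1} ψ(x_p + qε))` for suitable continuous `χ^q`. -/
theorem sprecher_superposition (n : ℕ) (hn : 2 ≤ n)
    (ε : ℝ) (hε : 0 < ε) (hε' : ε ≤ 1 / (2 * n)) :
    ∃ l : ℝ, 0 < l ∧
      (∀ c : Fin n → ℚ, ∑ p : Fin n, (c p : ℝ) * l ^ (p : ℕ) = 0 → c = 0) ∧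
      ∃ ψ : ℝ → ℝ,
        ContinuousOn ψ (Set.Icc (-1) (1 + 2 * n * ε)) ∧
        Set.MapsTo ψ (Set.Icc (-1) (1 + 2 * n * ε)) (Set.Icc 0 1) ∧
        ∀ f : (Fin n → ℝ) → ℝ, ContinuousOn f (Set.Icc 0 1) →
          ∃ χ : Fin (2 * n + 1) → ℝ → ℝ,
            (∀ q, Continuous (χ q)) ∧
            (∀ x ∈ Set.Icc (0 : Fin n → ℝ) 1,
              f x = ∑ q : Fin (2 * n + 1),
                χ q (∑ p : Fin n, l ^ (p : ℕ) * ψ (x p + ((q : ℕ) : ℝ) * ε))) := by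
  obtain ⟨l, hl0, hl⟩ := exists_lambda n
  refine ⟨l, hl0, hl, ?_⟩
  obtain ⟨ψ, hψ⟩ := exists_psi n ε hε l hl
  have hK : (-1:ℝ) ≤ 1 + 2 * n * ε := by
    have : 0 ≤ 2 * n * ε := by positivity
    linarith
  set M : ℝ := ‖ψ‖ with hM
  have hM0 : 0 ≤ M := norm_nonneg _
  have hA : 0 < 2 * M + 1 := by positivity
  refine ⟨fun t => (ψ (Set.projIcc (-1) (1 + 2 * n * ε) hK t) + M) / (2 * M + 1), ?_, ?_, ?_⟩
  · apply Continuous.continuousOn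
    exact ((ψ.continuous.comp continuous_projIcc).add continuous_const).div_const _
  · intro t _
    have h := ψ.norm_coe_le_norm (Set.projIcc (-1) (1 + 2 * n * ε) hK t)
    rw [Real.norm_eq_abs, abs_le] at h
    constructor
    · apply div_nonneg _ hA.le
      linarith [h.1]
    · rw [div_le_one hA]
      linarith [h.2]
  · intro f hf
    obtain ⟨g, hg⟩ := hψ ⟨fun x : SI n => f x, continuousOn_iff_continuous_domRestrict.mp hf⟩
    refine ⟨fun q t => g q ((2 * M + 1) * t - ∑ p : Fin n, l ^ (p:ℕ) * M), ?_, ?_⟩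
    · intro q
      exact (g q).continuous.comp ((continuous_const.mul continuous_id).sub continuous_const)
    · intro x hx
      have h1 := congrArg (fun F : C(SI n, ℝ) => F ⟨x, hx⟩) hg
      simp only [Lop_apply] at h1
      change f x = _ at h1
      rw [h1]
      refine Finset.sum_congr rfl fun q _ => ?_
      congr 1
      rw [Phi_apply, Finset.mul_sum, ← Finset.sum_sub_distrib]
      refine Finset.sum_congr rfl fun p _ => ?_
      have h2 : Set.projIcc (-1) (1 + 2 * n * ε) hK (x p + ((q:ℕ):ℝ) * ε) =
          shiftMap n ε hε q p ⟨x, hx⟩ :=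
        Set.projIcc_of_mem hK (shiftMap n ε hε q p ⟨x, hx⟩).2
      simp only [h2]
      field_simp
      ring
end
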